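/- arXiv:2601.18333 — 3 statements merged into one kernel-verified Lean document; each statement's English description precedes it below -/
import Mathlib

section
/- Kruskal's uniqueness theorem for third-order canonical polyadic decomposition: Let A ∈ ℂ^{I₁×Q}, B ∈ ℂ^{I₂×Q}, C ∈ ℂ^{I₃×Q} be matrices whose k-ranks satisfy k_A + k_B + k_C ≥ 2Q + 2, and define the third-order tensor 𝒴(i,j,k) = ∑_{q=1}^{Q} A(i,q)·B(j,q)·C(k,q). Then for any matrices Ā ∈ ℂ^{I₁×Q}, B̄ ∈ ℂ^{I₂×Q}, C̄ ∈ ℂ^{I₃×Q} satisfying ∑_{q=1}^{Q} Ā(i,q)·B̄(j,q)·C̄(k,q) = 𝒴(i,j,k) for all (i,j,k), there exist a permutation σ of {1,…,Q} and nonzero complex scalars λ_q, μ_q, ν_q with λ_q·μ_q·ν_q = 1 for every q, such that for all q and all row indices: Ā(·,q) = λ_q·A(·,σ(q)), B̄(·,q) = μ_q·B(·,σ(q)), and C̄(·,q) = ν_q·C(·,σ(q)). -/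
/-- The k-rank (Kruskal rank) of a complex matrix: the largest `k` such that
every set of `k` columns is linearly independent over `ℂ`. -/
noncomputable def kRank {m n : ℕ} (M : Matrix (Fin m) (Fin n) ℂ) : ℕ :=
  sSup {k | k ≤ n ∧ ∀ s : Finset (Fin n), s.card = k →
    LinearIndependent ℂ (fun j : s => fun i : Fin m => M i (j : Fin n))}

/-!
Contracting the third factors of two decompositions of one tensor with a functional `h` gives two
decompositions of one matrix, with `w` nonzero terms `h (c q)` and `w'` nonzero terms `h (c' q)`.
Its rank is at most `w'` and, by a Sylvester-type bound, at least
`min k_A w + min k_B w - w`. When `k_A + k_B + k_C ≥ 2Q + 2`, this forces `w ≤ w'` for every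
functional vanishing on at least `k_C - 1` of the vectors `c' q`.

Kruskal's permutation lemma turns this into a statement about lines. Call a span of vectors `c' q` a
flat. Every flat contains at least as many of the `c q` as of the `c' q`, by downward induction: for
flats of codimension at most one this is the bound on weights, and in general the flats covering a
given one partition all the vectors `c' q` outside it. Applied to the lines through the `c' q`,
which contain at most one `c q` each because `k_C ≥ 2`, it shows that `c'` is a rescaled permutation
of `c`. By symmetry the same holds for the other two factors. Evaluating both decompositions at
functionals supported on few columns shows that the three permutations coincide and that the scalars
multiply to one.
-/

open Finset Module Submodule
open scoped TensorProduct

/-- The Kruskal rank of a finite family of vectors: the largest `k` at most the size of the family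
such that any `k` of its members are linearly independent. -/
noncomputable def kruskalRank (K : Type*) {ι V : Type*} [Fintype ι] [DivisionRing K]
    [AddCommGroup V] [Module K V] (v : ι → V) : ℕ :=
  sSup {k | k ≤ Fintype.card ι ∧ ∀ s : Finset ι, #s = k → LinearIndepOn K v s}

lemma kRank_eq_kruskalRank {m n : ℕ} (M : Matrix (Fin m) (Fin n) ℂ) :
    kRank M = kruskalRank ℂ M.col := by
  rw [kruskalRank, Fintype.card_fin]
  rfl

section KruskalRank

variable {K ι V : Type*} [Fintype ι] [DivisionRing K] [AddCommGroup V] [Module K V] {v : ι → V}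

lemma kruskalRank_mem (v : ι → V) : kruskalRank K v ∈
    {k | k ≤ Fintype.card ι ∧ ∀ s : Finset ι, #s = k → LinearIndepOn K v s} :=
  Nat.sSup_mem ⟨0, Nat.zero_le _, fun s hs ↦ by simp [card_eq_zero.mp hs]⟩
    ⟨Fintype.card ι, fun _ hk ↦ hk.1⟩

lemma kruskalRank_le_card (v : ι → V) : kruskalRank K v ≤ Fintype.card ι :=
  (kruskalRank_mem v).1

lemma linearIndepOn_of_card_le_kruskalRank {s : Finset ι} (hs : #s ≤ kruskalRank K v) :
    LinearIndepOn K v s := by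
  obtain ⟨t, hst, ht⟩ := exists_superset_card_eq hs (kruskalRank_le_card v)
  exact ((kruskalRank_mem v).2 t ht).mono (mod_cast hst)

lemma ne_zero_of_kruskalRank_pos (hv : 0 < kruskalRank K v) (q : ι) : v q ≠ 0 := by
  have hq : LinearIndepOn K v ({q} : Finset ι) :=
    linearIndepOn_of_card_le_kruskalRank (by rwa [card_singleton])
  exact hq.ne_zero (mem_coe.mpr (mem_singleton_self q))

end KruskalRank

section Functionals

variable {K ι V : Type*} [Field K] [AddCommGroup V] [Module K V] {v : ι → V}

lemma exists_dual_eqOn_of_linearIndepOn {s : Set ι} (hv : LinearIndepOn K v s) (y : ι → K) :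
    ∃ f : Dual K V, Set.EqOn (f ∘ v) y s := by
  let e := Basis.span (LinearIndepOn.linearIndependent hv)
  obtain ⟨f, hf⟩ := (e.constr K fun i : s ↦ y i).exists_extend
  refine ⟨f, fun i hi ↦ ?_⟩
  calc
    f (v i) = f (e ⟨i, hi⟩) := by rw [Basis.span_apply]
    _ = y i := by simpa using LinearMap.congr_fun hf (e ⟨i, hi⟩)

variable [Fintype ι]

lemma exists_dual_eq_one_of_card_lt_kruskalRank {p : ι} {T : Finset ι} (hp : p ∉ T)
    (hT : #T < kruskalRank K v) : ∃ f : Dual K V, f (v p) = 1 ∧ ∀ t ∈ T, f (v t) = 0 := by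
  classical
  have hv : LinearIndepOn K v (insert p T : Finset ι) :=
    linearIndepOn_of_card_le_kruskalRank (by rwa [card_insert_of_notMem hp])
  obtain ⟨f, hf⟩ := exists_dual_eqOn_of_linearIndepOn hv (Pi.single p 1)
  refine ⟨f, by simpa using hf (x := p) (by simp), fun t ht ↦ ?_⟩
  simpa [ne_of_mem_of_not_mem ht hp] using hf (x := t) (by simp [ht])

open scoped Classical in
lemma exists_dual_eq_one_hammingNorm_add_le {p : ι} {T : Finset ι} (hp : p ∉ T)
    (hT : #T < kruskalRank K v) : ∃ f : Dual K V, f (v p) = 1 ∧ (∀ t ∈ T, f (v t) = 0) ∧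
      hammingNorm (f ∘ v) + kruskalRank K v ≤ Fintype.card ι + 1 := by
  have hcard := kruskalRank_le_card (K := K) v
  obtain ⟨T', hTT', hT'p, hT'⟩ := exists_subsuperset_card_eq (s := T) (t := univ.erase p)
    (n := kruskalRank K v - 1) (fun t ht ↦ by simpa using ne_of_mem_of_not_mem ht hp) (by omega)
    (by rw [card_erase_of_mem (mem_univ p), card_univ]; omega)
  obtain ⟨f, hfp, hfT'⟩ := exists_dual_eq_one_of_card_lt_kruskalRank (K := K) (v := v)
    (fun hpT' ↦ notMem_erase p univ (hT'p hpT')) (by omega)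
  have hsupp : hammingNorm (f ∘ v) ≤ #T'ᶜ :=
    card_le_card fun q hq ↦ mem_compl.mpr fun hqT' ↦ (mem_filter.mp hq).2 (hfT' q hqT')
  rw [card_compl] at hsupp
  exact ⟨f, hfp, fun t ht ↦ hfT' t (hTT' ht), by omega⟩

end Functionals

section RankInequality

variable {K ι κ U V : Type*} [Field K] [Fintype ι] [Fintype κ]
  [AddCommGroup U] [Module K U] [AddCommGroup V] [Module K V]
  {a : ι → U} {b : ι → V} {x : ι → K} {a' : κ → U} {b' : κ → V} {x' : κ → K}

open scoped Classical in
-- Functionals dual to `a` on `s` and to `b` on `t` cut out of the common matrix the diagonal block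
-- with entries `x q`, `q ∈ s ∩ t`, whose rank is at most the number of terms on the other side.
lemma card_inter_le_hammingNorm {s t : Finset ι} (ha : LinearIndepOn K a s)
    (hb : LinearIndepOn K b t) (hx : ∀ q ∉ s ∪ t, x q = 0) (hx₀ : ∀ q ∈ s ∩ t, x q ≠ 0)
    (heq : ∀ (f : Dual K U) (g : Dual K V),
      ∑ q, f (a' q) * x' q * g (b' q) = ∑ q, f (a q) * x q * g (b q)) :
    #(s ∩ t) ≤ hammingNorm x' := by
  choose f hf using fun q ↦ exists_dual_eqOn_of_linearIndepOn ha (Pi.single q 1)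
  choose g hg using fun q ↦ exists_dual_eqOn_of_linearIndepOn hb (Pi.single q 1)
  have hfs {p q : ι} (hp : p ∈ s) : f q (a p) = if p = q then 1 else 0 := by
    simpa [Pi.single_apply] using hf q (mem_coe.mpr hp)
  have hgt {p q : ι} (hp : p ∈ t) : g q (b p) = if p = q then 1 else 0 := by
    simpa [Pi.single_apply] using hg q (mem_coe.mpr hp)
  let F : Matrix ↥(s ∩ t) κ K := .of fun q i ↦ f q (a' i)
  let G : Matrix κ ↥(s ∩ t) K := .of fun i q ↦ g q (b' i)
  have hblock : F * Matrix.diagonal x' * G = Matrix.diagonal fun q : ↥(s ∩ t) ↦ x q := by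
    ext ⟨q, hq⟩ ⟨r, hr⟩
    obtain ⟨hqs, hqt⟩ := mem_inter.mp hq
    obtain ⟨hrs, -⟩ := mem_inter.mp hr
    calc
      (F * Matrix.diagonal x' * G) ⟨q, hq⟩ ⟨r, hr⟩ = ∑ p, f q (a p) * x p * g r (b p) := by
        rw [← heq, Matrix.mul_apply]
        simp only [Matrix.mul_diagonal, F, G, Matrix.of_apply]
      _ = f q (a q) * x q * g r (b q) := by
        refine sum_eq_single_of_mem q (mem_univ q) fun p _ hpq ↦ ?_
        by_cases hps : p ∈ s
        · simp [hfs hps, hpq]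
        by_cases hpt : p ∈ t
        · simp [hgt hpt, (ne_of_mem_of_not_mem hrs hps).symm]
        · simp [hx p (by simp [hps, hpt])]
      _ = _ := by simp [hfs hqs, hgt hqt, Matrix.diagonal_apply]
  calc
    #(s ∩ t) = (Matrix.diagonal fun q : ↥(s ∩ t) ↦ x q).rank := by
      rw [Matrix.rank_diagonal, Fintype.card_of_subtype univ (by simpa using hx₀)]
      simp
    _ ≤ (Matrix.diagonal x').rank := by
      rw [← hblock]
      exact (Matrix.rank_mul_le_left _ _).trans (Matrix.rank_mul_le_right _ _)
    _ = hammingNorm x' := by rw [Matrix.rank_diagonal, Fintype.card_subtype, hammingNorm]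

open scoped Classical in
lemma min_kruskalRank_add_min_kruskalRank_le
    (heq : ∀ (f : Dual K U) (g : Dual K V),
      ∑ q, f (a' q) * x' q * g (b' q) = ∑ q, f (a q) * x q * g (b q)) :
    min (kruskalRank K a) (hammingNorm x) + min (kruskalRank K b) (hammingNorm x) ≤
      hammingNorm x + hammingNorm x' := by
  set S : Finset ι := {q | x q ≠ 0} with hS
  have hSx : hammingNorm x = #S := rfl
  rw [hSx]
  obtain hlt | hle := lt_or_ge (min (kruskalRank K a) #S + min (kruskalRank K b) #S) #S
  · omega
  obtain ⟨s, hsS, hs⟩ := exists_subset_card_eq (min_le_right (kruskalRank K a) #S)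
  obtain ⟨t, hst, htS, ht⟩ := exists_subsuperset_card_eq (sdiff_subset : S \ s ⊆ S)
    (n := min (kruskalRank K b) #S) (by rw [card_sdiff_of_subset hsS]; omega) (min_le_right _ _)
  have hunion : s ∪ t = S :=
    (union_subset hsS htS).antisymm (sdiff_le_iff.mp hst)
  have hinter : #(s ∩ t) ≤ hammingNorm x' :=
    card_inter_le_hammingNorm (linearIndepOn_of_card_le_kruskalRank (by omega))
      (linearIndepOn_of_card_le_kruskalRank (by omega)) (fun q hq ↦ by simpa [hunion, hS] using hq)
      (fun q hq ↦ by simpa [hS] using hsS (mem_of_mem_inter_left hq)) heq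
  have hcard := card_union_add_card_inter s t
  rw [hunion] at hcard
  omega

end RankInequality

section Covers

variable {K ι W : Type*} [DivisionRing K] [Fintype ι] [AddCommGroup W] [Module K W]

lemma span_singleton_sup_eq_of_covBy {X Z : Submodule K W} {v : W} (hXZ : X ⋖ Z) (hvZ : v ∈ Z)
    (hvX : v ∉ X) : span K {v} ⊔ X = Z :=
  have hlt := (covBy_span_singleton_sup hvX).lt
  (hXZ.eq_or_eq hlt.le (sup_le (by simpa using hvZ) hXZ.le)).resolve_left hlt.ne'

open scoped Classical in
-- Distinct covers of `X` meet only in `X`.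
lemma sum_card_mem_of_covBy {X : Submodule K W} {P : Finset (Submodule K W)}
    (hP : ∀ Z ∈ P, X ⋖ Z) (d : ι → W) :
    ∑ Z ∈ P, #{q | d q ∈ Z} = #P * #{q | d q ∈ X} + #{q | d q ∉ X ∧ ∃ Z ∈ P, d q ∈ Z} := by
  have hsplit : ∀ Z ∈ P, #{q | d q ∈ Z} = #{q | d q ∈ X} + #{q | d q ∉ X ∧ d q ∈ Z} := by
    intro Z hZ
    rw [← card_filter_add_card_filter_not (s := {q | d q ∈ Z}) (fun q ↦ d q ∈ X), filter_filter,
      filter_filter]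
    congr 2
    · exact filter_congr fun q _ ↦ and_iff_right_of_imp fun hq ↦ (hP Z hZ).le hq
    · exact filter_congr fun q _ ↦ and_comm
  have hdisj : (P : Set (Submodule K W)).PairwiseDisjoint
      fun Z ↦ ({q | d q ∉ X ∧ d q ∈ Z} : Finset ι) := by
    intro Z hZ Z' hZ' hne
    refine disjoint_left.mpr fun q hq hq' ↦ hne ?_
    obtain ⟨hqX, hqZ⟩ := (mem_filter.mp hq).2
    rw [← span_singleton_sup_eq_of_covBy (hP Z hZ) hqZ hqX,
      span_singleton_sup_eq_of_covBy (hP Z' hZ') (mem_filter.mp hq').2.2 hqX]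
  rw [sum_congr rfl hsplit, sum_add_distrib, sum_const, smul_eq_mul, ← card_biUnion hdisj]
  congr 2
  ext q
  simp only [mem_biUnion, mem_filter_univ]
  tauto

open scoped Classical in
lemma card_mem_le_of_covBy {X : Submodule K W} {P : Finset (Submodule K W)} {c c' : ι → W}
    (hP : ∀ Z ∈ P, X ⋖ Z) (hPcard : 1 < #P)
    (hc' : ∀ q, c' q ∉ X → ∃ Z ∈ P, c' q ∈ Z)
    (hle : ∀ Z ∈ P, #{q | c' q ∈ Z} ≤ #{q | c q ∈ Z}) :
    #{q | c' q ∈ X} ≤ #{q | c q ∈ X} := by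
  have hsum := sum_le_sum hle
  rw [sum_card_mem_of_covBy hP, sum_card_mem_of_covBy hP,
    filter_congr fun q _ ↦ and_iff_left_of_imp (hc' q)] at hsum
  have hout : #{q | c q ∉ X ∧ ∃ Z ∈ P, c q ∈ Z} ≤ #{q | c q ∉ X} :=
    card_le_card (monotone_filter_right _ fun q _ hq ↦ hq.1)
  have hN := card_filter_add_card_filter_not (s := univ) (fun q ↦ c' q ∈ X)
  have hM := card_filter_add_card_filter_not (s := univ) (fun q ↦ c q ∈ X)
  refine Nat.le_of_mul_le_mul_left (c := #P - 1) ?_ (by omega)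
  rw [Nat.sub_mul, Nat.sub_mul]
  omega

end Covers

section PermutationLemma

variable {K ι W : Type*} [Field K] [Fintype ι] [AddCommGroup W] [Module K W] {c c' : ι → W}

open scoped Classical in
/-- The hypothesis of Kruskal's permutation lemma: every functional that is nonzero on few members
of `c'`, the bound being `card ι + 1 - kruskalRank K c`, is nonzero on at most as many members of
`c`. -/
def WeightDominated (K : Type*) {ι W : Type*} [Field K] [Fintype ι] [AddCommGroup W] [Module K W]
    (c c' : ι → W) : Prop :=
  ∀ h : Dual K W, hammingNorm (h ∘ c') + kruskalRank K c ≤ Fintype.card ι + 1 →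
    hammingNorm (h ∘ c) ≤ hammingNorm (h ∘ c')

lemma WeightDominated.mem_span_range (hw : WeightDominated K c c') (q : ι) :
    c q ∈ span K (Set.range c') := by
  classical
  by_contra hq
  obtain ⟨f, hfq, hf⟩ := exists_le_ker_of_notMem hq
  have hfc' : hammingNorm (f ∘ c') = 0 :=
    hammingNorm_eq_zero.mpr (funext fun p ↦ hf (subset_span ⟨p, rfl⟩))
  have hfc := hw f (by have := kruskalRank_le_card (K := K) c; omega)
  rw [hfc', Nat.le_zero, hammingNorm_eq_zero] at hfc
  exact hfq (congrFun hfc q)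

lemma WeightDominated.kruskalRank_le_finrank_span (hw : WeightDominated K c c') :
    kruskalRank K c ≤ finrank K (span K (Set.range c')) := by
  obtain ⟨T, -, hT⟩ := exists_subset_card_eq (kruskalRank_le_card (K := K) c)
  have hli : LinearIndependent K fun t : T ↦ c t := linearIndepOn_of_card_le_kruskalRank hT.le
  have : Module.Finite K (span K (Set.range c')) := .span_of_finite K (Set.finite_range c')
  calc
    kruskalRank K c = finrank K (span K (Set.range fun t : T ↦ c t)) := by
      rw [finrank_span_eq_card hli, Fintype.card_coe, hT]
    _ ≤ _ := finrank_mono (span_le.mpr (Set.range_subset_iff.mpr fun t ↦ hw.mem_span_range t))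

lemma apply_eq_zero_iff_mem_of_mem_span_singleton_sup {X : Submodule K W} {u v : W}
    {f : Dual K W} (hfX : X ≤ LinearMap.ker f) (hfu : f u ≠ 0) (hv : v ∈ span K {u} ⊔ X) :
    f v = 0 ↔ v ∈ X := by
  refine ⟨fun hfv ↦ ?_, fun hvX ↦ hfX hvX⟩
  obtain ⟨_, hu, x, hx, rfl⟩ := mem_sup.mp hv
  obtain ⟨t, rfl⟩ := mem_span_singleton.mp hu
  have hfx : f x = 0 := hfX hx
  have ht : t = 0 := by simpa [hfx, hfu] using hfv
  simpa [ht] using hx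

open scoped Classical in
lemma WeightDominated.card_mem_le_of_le_span_singleton_sup (hw : WeightDominated K c c')
    {s : Set ι} {q₀ : ι} (hq₀ : c' q₀ ∉ span K (c' '' s))
    (htop : span K (Set.range c') ≤ span K {c' q₀} ⊔ span K (c' '' s)) :
    #{q | c' q ∈ span K (c' '' s)} ≤ #{q | c q ∈ span K (c' '' s)} := by
  obtain ⟨f, hfq₀, hfX⟩ := exists_le_ker_of_notMem hq₀
  have hsupp {d : ι → W} (hd : ∀ q, d q ∈ span K (Set.range c')) :
      #{q | d q ∈ span K (c' '' s)} + hammingNorm (f ∘ d) = Fintype.card ι := by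
    simp only [← apply_eq_zero_iff_mem_of_mem_span_singleton_sup hfX hfq₀ (htop (hd _))]
    exact card_filter_add_card_filter_not _
  have hdim : finrank K (span K (Set.range c')) ≤ #{q | c' q ∈ span K (c' '' s)} + 1 := by
    have hle : span K (Set.range c') ≤
        span K ((insert q₀ ({q | c' q ∈ span K (c' '' s)} : Finset ι)).image c' : Set W) := by
      rw [coe_image, coe_insert, Set.image_insert_eq, span_insert]
      refine htop.trans (sup_le_sup_left (span_mono (Set.image_mono fun q hq ↦ ?_)) _)
      simpa using subset_span (Set.mem_image_of_mem c' hq)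
    calc
      _ ≤ _ := finrank_mono hle
      _ ≤ _ := finrank_span_finset_le_card _
      _ ≤ _ := card_image_le
      _ ≤ _ := card_insert_le _ _
  have hc' := hsupp fun q ↦ subset_span ⟨q, rfl⟩
  have hc := hsupp hw.mem_span_range
  have hdom := hw f (by have := hw.kruskalRank_le_finrank_span; omega)
  omega

open scoped Classical in
theorem WeightDominated.card_mem_span_image_le (hw : WeightDominated K c c') (s : Set ι) :
    #{q | c' q ∈ span K (c' '' s)} ≤ #{q | c q ∈ span K (c' '' s)} := by
  induction hn : #{q | c' q ∉ span K (c' '' s)} using Nat.strong_induction_on generalizing s with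
  | _ n ih
  set X := span K (c' '' s) with hX
  by_cases hall : ∀ q, c' q ∈ X
  · have hYX : span K (Set.range c') ≤ X := span_le.mpr (Set.range_subset_iff.mpr hall)
    rw [filter_true_of_mem fun q _ ↦ hYX (hw.mem_span_range q)]
    exact card_filter_le _ _
  push Not at hall
  obtain ⟨q₀, hq₀⟩ := hall
  by_cases htop : span K (Set.range c') ≤ span K {c' q₀} ⊔ X
  · exact hw.card_mem_le_of_le_span_singleton_sup hq₀ htop
  obtain ⟨q₁, hq₁⟩ : ∃ q₁, c' q₁ ∉ span K {c' q₀} ⊔ X := by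
    simpa [span_le, Set.range_subset_iff] using htop
  have hq₁X : c' q₁ ∉ X := fun h ↦ hq₁ (mem_sup_right h)
  have hself (q : ι) : c' q ∈ span K {c' q} ⊔ X :=
    mem_sup_left (mem_span_singleton_self _)
  let P : Finset (Submodule K W) := ({q | c' q ∉ X} : Finset ι).image fun q ↦ span K {c' q} ⊔ X
  have hmem {q : ι} (hq : c' q ∉ X) : span K {c' q} ⊔ X ∈ P :=
    mem_image_of_mem _ (by simpa using hq)
  refine card_mem_le_of_covBy (P := P) ?_ ?_ (fun q hq ↦ ⟨_, hmem hq, hself q⟩) ?_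
  · simpa [P] using fun q hq ↦ covBy_span_singleton_sup hq
  · exact one_lt_card.mpr ⟨_, hmem hq₀, _, hmem hq₁X, fun h ↦ hq₁ (h ▸ hself q₁)⟩
  · simp only [P, forall_mem_image, mem_filter_univ]
    intro q hq
    have hspan : span K {c' q} ⊔ X = span K (c' '' insert q s) := by
      rw [Set.image_insert_eq, span_insert, hX]
    have hlt : #{p | c' p ∉ span K {c' q} ⊔ X} < n := by
      rw [← hn]
      refine card_lt_card ⟨monotone_filter_right _ fun p _ hp hpX ↦ hp (mem_sup_right hpX),
        fun hsub ↦ ?_⟩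
      simpa using (mem_filter.mp (hsub (by simpa using hq))).2 (hself q)
    rw [hspan] at hlt ⊢
    exact ih _ hlt _ rfl

open scoped Classical in
lemma card_mem_span_singleton_le_one (hc : 2 ≤ kruskalRank K c) (v : W) :
    #{q | c q ∈ span K {v}} ≤ 1 := by
  refine card_le_one.mpr fun p hp r hr ↦ by_contra fun hpr ↦ ?_
  obtain ⟨x, hx⟩ := mem_span_singleton.mp (mem_filter.mp hp).2
  obtain ⟨y, hy⟩ := mem_span_singleton.mp (mem_filter.mp hr).2
  obtain ⟨f, hfp, hfr⟩ := exists_dual_eq_one_of_card_lt_kruskalRank (K := K) (v := c) (p := p)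
    (T := {r}) (by simpa using hpr) (by rw [card_singleton]; omega)
  replace hfr : f (c r) = 0 := hfr r (mem_singleton_self r)
  have hfv : f v ≠ 0 := fun h ↦ by simp [← hx, h] at hfp
  have hy₀ : y = 0 := by simpa [← hy, hfv] using hfr
  exact ne_zero_of_kruskalRank_pos (two_pos.trans_le hc) r (by rw [← hy, hy₀, zero_smul])

theorem WeightDominated.exists_perm_smul (hw : WeightDominated K c c')
    (hc : 2 ≤ kruskalRank K c) :
    ∃ (σ : Equiv.Perm ι) (nu : ι → K), (∀ q, nu q ≠ 0) ∧ ∀ q, c' q = nu q • c (σ q) := by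
  classical
  have hline (q : ι) : #{p | c' p ∈ span K {c' q}} ≤ #{p | c p ∈ span K {c' q}} := by
    simpa using hw.card_mem_span_image_le {q}
  have hex (q : ι) : ∃ (p : ι) (x : K), x ≠ 0 ∧ c' q = x • c p := by
    obtain ⟨p, hp⟩ := card_pos.mp ((card_pos.mpr ⟨q, by simp⟩).trans_le (hline q))
    obtain ⟨t, ht⟩ := mem_span_singleton.mp (mem_filter.mp hp).2
    have ht₀ : t ≠ 0 := by
      rintro rfl
      exact ne_zero_of_kruskalRank_pos (two_pos.trans_le hc) p (by rw [← ht, zero_smul])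
    exact ⟨p, t⁻¹, inv_ne_zero ht₀, (inv_smul_eq_iff₀ ht₀).mpr ht.symm |>.symm⟩
  choose σ nu hnu₀ hnu using hex
  have hσ : Function.Injective σ := fun p q hpq ↦ by
    refine card_le_one.mp ((hline q).trans (card_mem_span_singleton_le_one hc _)) p ?_ q (by simp)
    have hp : c' p = (nu p * (nu q)⁻¹) • c' q := by
      rw [hnu p, hnu q, hpq, smul_smul, inv_mul_cancel_right₀ (hnu₀ q)]
    simpa using mem_span_singleton.mpr ⟨_, hp.symm⟩
  exact ⟨.ofBijective σ (Finite.injective_iff_bijective.mp hσ), nu, hnu₀, hnu⟩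

end PermutationLemma

section TensorIdentity

variable {K ι U V W : Type*} [Field K] [Fintype ι] [AddCommGroup U] [Module K U]
  [AddCommGroup V] [Module K V] [AddCommGroup W] [Module K W]
  {a a' : ι → U} {b b' : ι → V} {c c' : ι → W}

/-- The families `(a, b, c)` and `(a', b', c')` are polyadic decompositions of the same tensor.
Equality of the two sums of rank-one tensors is tested against products of functionals. -/
def SameTensor (K : Type*) {ι U V W : Type*} [Field K] [Fintype ι] [AddCommGroup U] [Module K U]
    [AddCommGroup V] [Module K V] [AddCommGroup W] [Module K W] (a : ι → U) (b : ι → V) (c : ι → W)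
    (a' : ι → U) (b' : ι → V) (c' : ι → W) : Prop :=
  ∀ (f : Dual K U) (g : Dual K V) (h : Dual K W),
    ∑ q, f (a' q) * g (b' q) * h (c' q) = ∑ q, f (a q) * g (b q) * h (c q)

lemma SameTensor.of_sum_tmul_eq
    (heq : ∑ q, a' q ⊗ₜ[K] b' q ⊗ₜ[K] c' q = ∑ q, a q ⊗ₜ[K] b q ⊗ₜ[K] c q) :
    SameTensor K a b c a' b' c' := fun f g h ↦ by
  let fg := LinearMap.mul' K K ∘ₗ TensorProduct.map f g
  simpa [fg] using congrArg (LinearMap.mul' K K ∘ₗ TensorProduct.map fg h) heq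

lemma SameTensor.rotate (hT : SameTensor K a b c a' b' c') : SameTensor K b c a b' c' a' :=
  fun g h f ↦ by convert hT f g h using 2 <;> ring

theorem SameTensor.weightDominated (hT : SameTensor K a b c a' b' c')
    (hk : 2 * Fintype.card ι + 2 ≤ kruskalRank K a + kruskalRank K b + kruskalRank K c) :
    WeightDominated K c c' := by
  classical
  intro h hle
  have hmin := min_kruskalRank_add_min_kruskalRank_le (K := K) (a := a) (b := b) (a' := a')
    (b' := b') (x := h ∘ c) (x' := h ∘ c')
    fun f g ↦ by simpa only [Function.comp_apply, mul_right_comm] using hT f g h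
  have hcard : hammingNorm (h ∘ c) ≤ Fintype.card ι := hammingNorm_le_card_fintype
  have hA := kruskalRank_le_card (K := K) a
  have hB := kruskalRank_le_card (K := K) b
  omega

theorem SameTensor.perm_eq (hT : SameTensor K a b c a' b' c')
    (hk : 2 * Fintype.card ι + 2 ≤ kruskalRank K a + kruskalRank K b + kruskalRank K c)
    {σ τ : Equiv.Perm ι} {lam nu : ι → K} (hlam : ∀ q, a' q = lam q • a (τ q))
    (hnu : ∀ q, c' q = nu q • c (σ q)) : τ = σ := by
  classical
  have hA := kruskalRank_le_card (K := K) a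
  have hB := kruskalRank_le_card (K := K) b
  refine Equiv.ext fun q₀ ↦ by_contra fun hne ↦ ?_
  obtain ⟨h, hσ, hτ, hcard⟩ := exists_dual_eq_one_hammingNorm_add_le (K := K) (v := c)
    (p := σ q₀) (T := {τ q₀}) (by simpa using Ne.symm hne) (by rw [card_singleton]; omega)
  replace hτ : h (c (τ q₀)) = 0 := hτ _ (mem_singleton_self _)
  let S : Finset ι := {q | h (c q) ≠ 0}
  have hS : #S + kruskalRank K c ≤ Fintype.card ι + 1 := hcard
  let R : Finset ι := S.map (σ.symm.trans τ).toEmbedding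
  have hRS : #R = #S := card_map _
  have hτR : τ q₀ ∈ R := mem_map.mpr ⟨σ q₀, by simp [S, hσ], by simp⟩
  obtain ⟨s, hsS, hsR⟩ : ∃ s ∈ S, s ∉ R := not_subset.mp fun hSR ↦ by
    have hτS := eq_of_subset_of_card_le hSR hRS.le ▸ hτR
    simp [S, hτ] at hτS
  obtain ⟨f, hfs, hfR⟩ := exists_dual_eq_one_of_card_lt_kruskalRank (K := K) (v := a) hsR (by omega)
  obtain ⟨g, hgs, hgS⟩ := exists_dual_eq_one_of_card_lt_kruskalRank (K := K) (v := b)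
    (notMem_erase s S) (by rw [card_erase_of_mem hsS]; omega)
  have hright : ∑ q, f (a q) * g (b q) * h (c q) = h (c s) := by
    rw [sum_eq_single_of_mem s (mem_univ s) fun q _ hqs ↦ ?_]
    · rw [hfs, hgs, one_mul, one_mul]
    by_cases hq : h (c q) = 0
    · rw [hq, mul_zero]
    · rw [hgS q (mem_erase.mpr ⟨hqs, by simpa [S] using hq⟩), mul_zero, zero_mul]
  have hleft : ∑ q, f (a' q) * g (b' q) * h (c' q) = 0 := by
    refine sum_eq_zero fun q _ ↦ ?_
    by_cases hq : h (c (σ q)) = 0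
    · simp [hnu, hq]
    · simp [hlam, hfR (τ q) (mem_map.mpr ⟨σ q, by simpa [S] using hq, by simp⟩)]
  exact (mem_filter.mp hsS).2 (by rw [← hright, ← hT, hleft])

theorem SameTensor.mul_eq_one (hT : SameTensor K a b c a' b' c')
    (hk : 2 * Fintype.card ι + 2 ≤ kruskalRank K a + kruskalRank K b + kruskalRank K c)
    {σ : Equiv.Perm ι} {lam mu nu : ι → K} (hlam : ∀ q, a' q = lam q • a (σ q))
    (hmu : ∀ q, b' q = mu q • b (σ q)) (hnu : ∀ q, c' q = nu q • c (σ q)) (q₀ : ι) :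
    lam q₀ * mu q₀ * nu q₀ = 1 := by
  classical
  have hA := kruskalRank_le_card (K := K) a
  have hB := kruskalRank_le_card (K := K) b
  obtain ⟨h, hh, -, hcard⟩ := exists_dual_eq_one_hammingNorm_add_le (K := K) (v := c)
    (notMem_empty (σ q₀)) (by rw [card_empty]; omega)
  let S : Finset ι := {q | h (c q) ≠ 0}
  have hS : #S + kruskalRank K c ≤ Fintype.card ι + 1 := hcard
  obtain ⟨f, hf, -⟩ := exists_dual_eq_one_of_card_lt_kruskalRank (K := K) (v := a)
    (notMem_empty (σ q₀)) (by rw [card_empty]; omega)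
  obtain ⟨g, hg, hgS⟩ := exists_dual_eq_one_of_card_lt_kruskalRank (K := K) (v := b)
    (notMem_erase (σ q₀) S) ((card_erase_le).trans_lt (by omega))
  have hzero : ∀ q, q ≠ σ q₀ → g (b q) * h (c q) = 0 := fun q hq ↦ by
    by_cases hq₀ : h (c q) = 0
    · rw [hq₀, mul_zero]
    · rw [hgS q (mem_erase.mpr ⟨hq, by simpa [S] using hq₀⟩), zero_mul]
  have hright : ∑ q, f (a q) * g (b q) * h (c q) = 1 := by
    rw [sum_eq_single_of_mem (σ q₀) (mem_univ _) fun q _ hq ↦ by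
      rw [mul_assoc, hzero q hq, mul_zero], hf, hg, hh, one_mul, one_mul]
  have hleft : ∑ q, f (a' q) * g (b' q) * h (c' q) = lam q₀ * mu q₀ * nu q₀ := by
    rw [sum_eq_single_of_mem q₀ (mem_univ _) fun q _ hq ↦ ?_]
    · simp [hlam, hmu, hnu, hf, hg, hh]
    · simp only [hlam, hmu, hnu, map_smul, smul_eq_mul]
      linear_combination
        (lam q * f (a (σ q)) * mu q * nu q) * hzero (σ q) (σ.injective.ne hq)
  rw [← hleft, hT, hright]

theorem kruskal_cpd_uniqueness_general
    (hk : 2 * Fintype.card ι + 2 ≤ kruskalRank K a + kruskalRank K b + kruskalRank K c)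
    (heq : ∑ q, a' q ⊗ₜ[K] b' q ⊗ₜ[K] c' q = ∑ q, a q ⊗ₜ[K] b q ⊗ₜ[K] c q) :
    ∃ (σ : Equiv.Perm ι) (lam mu nu : ι → K),
      (∀ q, lam q ≠ 0 ∧ mu q ≠ 0 ∧ nu q ≠ 0 ∧ lam q * mu q * nu q = 1) ∧
      (∀ q, a' q = lam q • a (σ q)) ∧ (∀ q, b' q = mu q • b (σ q)) ∧
      ∀ q, c' q = nu q • c (σ q) := by
  have hABC : SameTensor K a b c a' b' c' := .of_sum_tmul_eq heq
  have hA := kruskalRank_le_card (K := K) a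
  have hB := kruskalRank_le_card (K := K) b
  have hC := kruskalRank_le_card (K := K) c
  obtain ⟨σ, nu, hnu₀, hnu⟩ := (hABC.weightDominated hk).exists_perm_smul (by omega)
  obtain ⟨τ, lam, hlam₀, hlam⟩ :=
    (hABC.rotate.weightDominated (by omega)).exists_perm_smul (by omega)
  obtain ⟨ρ, mu, hmu₀, hmu⟩ :=
    (hABC.rotate.rotate.weightDominated (by omega)).exists_perm_smul (by omega)
  obtain rfl : τ = σ := hABC.perm_eq hk hlam hnu
  obtain rfl : ρ = τ := hABC.rotate.perm_eq (by omega) hmu hlam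
  exact ⟨ρ, lam, mu, nu, fun q ↦ ⟨hlam₀ q, hmu₀ q, hnu₀ q, hABC.mul_eq_one hk hlam hmu hnu q⟩,
    hlam, hmu, hnu⟩

end TensorIdentity

lemma sum_tmul_eq_of_forall_sum_mul_eq {R ι l m n : Type*} [CommRing R] [Fintype ι]
    [Finite l] [Finite m] [Finite n] {a a' : ι → l → R} {b b' : ι → m → R} {c c' : ι → n → R}
    (heq : ∀ i j k, ∑ q, a' q i * b' q j * c' q k = ∑ q, a q i * b q j * c q k) :
    ∑ q, a' q ⊗ₜ[R] b' q ⊗ₜ[R] c' q = ∑ q, a q ⊗ₜ[R] b q ⊗ₜ[R] c q := by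
  let e := ((Pi.basisFun R l).tensorProduct (Pi.basisFun R m)).tensorProduct (Pi.basisFun R n)
  refine e.ext_elem fun ⟨⟨i, j⟩, k⟩ ↦ ?_
  simpa [e, mul_comm, mul_left_comm] using heq i j k

/-- Kruskal's uniqueness theorem for third-order canonical polyadic decomposition. -/
theorem kruskal_cpd_uniqueness {I₁ I₂ I₃ Q : ℕ}
    (A : Matrix (Fin I₁) (Fin Q) ℂ) (B : Matrix (Fin I₂) (Fin Q) ℂ)
    (C : Matrix (Fin I₃) (Fin Q) ℂ)
    (hKruskal : 2 * Q + 2 ≤ kRank A + kRank B + kRank C)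
    (A' : Matrix (Fin I₁) (Fin Q) ℂ) (B' : Matrix (Fin I₂) (Fin Q) ℂ)
    (C' : Matrix (Fin I₃) (Fin Q) ℂ)
    (heq : ∀ (i : Fin I₁) (j : Fin I₂) (k : Fin I₃),
      ∑ q : Fin Q, A' i q * B' j q * C' k q = ∑ q : Fin Q, A i q * B j q * C k q) :
    ∃ (σ : Equiv.Perm (Fin Q)) (lam mu nu : Fin Q → ℂ),
      (∀ q, lam q ≠ 0 ∧ mu q ≠ 0 ∧ nu q ≠ 0 ∧ lam q * mu q * nu q = 1) ∧
      (∀ (q : Fin Q) (i : Fin I₁), A' i q = lam q * A i (σ q)) ∧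
      (∀ (q : Fin Q) (j : Fin I₂), B' j q = mu q * B j (σ q)) ∧
      (∀ (q : Fin Q) (k : Fin I₃), C' k q = nu q * C k (σ q)) := by
  simp only [kRank_eq_kruskalRank] at hKruskal
  simpa only [funext_iff, Pi.smul_apply, smul_eq_mul, Matrix.col_apply] using
    kruskal_cpd_uniqueness_general (by rwa [Fintype.card_fin])
      (sum_tmul_eq_of_forall_sum_mul_eq (a := A.col) (b := B.col) (c := C.col) (a' := A'.col)
        (b' := B'.col) (c' := C'.col) heq)
end

section
/- Generalized Kruskal uniqueness theorem for block term decomposition into rank-(L_q,L_q,1) terms: Let Q ≥ 1 and block sizes L_1,…,L_Q ≥ 1; for each q let A_q ∈ ℂ^{I₁×L_q} and B_q ∈ ℂ^{I₂×L_q} both have full column rank L_q, and let c_q ∈ ℂ^{I₃}. Assume I₁ ≥ max_q L_q, I₂ ≥ max_q L_q, I₁·I₂ ≥ ∑_{q=1}^{Q} L_q², and k'_A + k'_B + k_C ≥ 2Q + 2, where k'_A (resp. k'_B) is the generalized k-rank of the block-partitioned matrix A = [A_1 … A_Q] (resp. B = [B_1 … B_Q]) and k_C is the k-rank of C = [c_1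 … c_Q]. Define the tensor 𝒴(i,j,k) = ∑_{q=1}^{Q} (A_q B_qᵀ)(i,j)·c_q(k). Then for any alternative factors Ā_q ∈ ℂ^{I₁×L_q}, B̄_q ∈ ℂ^{I₂×L_q}, c̄_q ∈ ℂ^{I₃} producing the same tensor 𝒴, there exist a permutation σ of {1,…,Q} with L_{σ(q)} = L_q for all q, invertible matrices M_q, N_q ∈ ℂ^{L_q×L_q}, and nonzero scalars λ_q with λ_q·M_q·N_qᵀ = I_{L_q}, such that Ā_q = A_{σ(q)}·M_q, B̄_q = B_{σ(q)}·N_q, and c̄_q = λ_q·c_{σ(q)} for every q. -/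
/-!
Applying a functional `φ` to the third mode turns the equality of tensors into
`∑ q, φ (c q) • E q = ∑ q, φ (c' q) • E' q`, where `E q = A q * (B q)ᵀ` and `E' q = A' q * (B' q)ᵀ`
have rank at most `L q`. The k-ranks of `A` and `B` enter only through a rank bound: a combination
of the `E q` has rank at least the total size of any `t = k'_A + k'_B - Q` blocks that occur in it.

Evaluating both sides at a `φ` that is generic among the functionals vanishing on a subspace `U`
shows that the blocks with `c' q ∈ U` weigh no more than any `k_C - 2` or more blocks that include
those with `c q ∈ U`. For the span `U` of `k_C - 2` of the `c' q` chosen with the largest possible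
weight, these inequalities are tight: `U` is also spanned by `k_C - 2` of the `c q`, and modulo `U`
the other `c q` and `c' q` span the same distinct lines. Functionals vanishing on `U` thus give an
identity between the remaining, at most `t`, terms with proportional coefficients; equality in the
rank bound makes the ranges of these `E q` independent and forces the terms to agree one by one.
Functionals dual to the chosen `c' q` then match the terms inside `U`.
-/

open Matrix

/-- The generalized k-rank of a block-partitioned matrix `A = [A_1 … A_Q]`:
the largest `k` such that for every choice of `k` distinct blocks, the collection
of all columns of those blocks is linearly independent over `ℂ`. -/
noncomputable def gkRank {m Q : ℕ} (L : Fin Q → ℕ)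
    (A : ∀ q : Fin Q, Matrix (Fin m) (Fin (L q)) ℂ) : ℕ :=
  sSup {k | k ≤ Q ∧ ∀ s : Finset (Fin Q), s.card = k →
    LinearIndependent ℂ
      (fun p : Σ q : {q : Fin Q // q ∈ s}, Fin (L q.1) => fun i : Fin m => A p.1 i p.2)}

section LinearAlgebra

open Module

variable {K ι V W₁ W₂ : Type*} [Field K] [AddCommGroup V] [Module K V] [AddCommGroup W₁]
  [Module K W₁] [AddCommGroup W₂] [Module K W₂]

theorem finrank_finset_sup_le_sum [FiniteDimensional K V] (R : ι → Submodule K V) (s : Finset ι) :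
    finrank K (s.sup R : Submodule K V) ≤ ∑ i ∈ s, finrank K (R i) := by
  classical
  induction s using Finset.induction_on with
  | empty => simp
  | insert a s ha ih =>
    rw [Finset.sup_insert, Finset.sum_insert ha]
    exact (Submodule.finrank_add_le_finrank_add_finrank _ _).trans (by gcongr)

theorem finrank_span_image_le_card (v : ι → V) (s : Finset ι) :
    finrank K (Submodule.span K (v '' s)) ≤ s.card := by
  classical
  rw [← Finset.coe_image]
  exact (finrank_span_finset_le_card _).trans Finset.card_image_le

theorem range_sum_smul_le_sup (E : ι → W₁ →ₗ[K] W₂) (y : ι → K) (s : Finset ι) :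
    LinearMap.range (∑ i ∈ s, y i • E i) ≤ s.sup fun i => LinearMap.range (E i) := by
  rintro _ ⟨x, rfl⟩
  rw [LinearMap.sum_apply]
  exact Submodule.sum_mem _ fun i hi => Submodule.smul_mem _ _
    (Finset.le_sup (f := fun i => LinearMap.range (E i)) hi ⟨x, rfl⟩)

theorem finrank_range_sum_smul_le [FiniteDimensional K W₂] (E : ι → W₁ →ₗ[K] W₂) (y : ι → K)
    (s : Finset ι) :
    finrank K (LinearMap.range (∑ i ∈ s, y i • E i)) ≤
      ∑ i ∈ s, finrank K (LinearMap.range (E i)) :=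
  (Submodule.finrank_mono (range_sum_smul_le_sup E y s)).trans (finrank_finset_sup_le_sum _ s)

theorem exists_dual_ker_le_apply_eq_zero_iff [Infinite K] [Finite ι] (U : Submodule K V)
    (v : ι → V) :
    ∃ φ : Dual K V, U ≤ LinearMap.ker φ ∧ ∀ i, φ (v i) = 0 ↔ v i ∈ U := by
  obtain ⟨φ, hφ⟩ := exists_dual_forall_apply_ne_zero (K := K) (M := V ⧸ U)
    (fun i : {i // v i ∉ U} => U.mkQ (v i)) fun i h => i.2 ((Submodule.Quotient.mk_eq_zero U).1 h)
  have hU : ∀ x ∈ U, φ (U.mkQ x) = 0 := fun x hx => by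
    rw [Submodule.mkQ_apply, (Submodule.Quotient.mk_eq_zero U).2 hx, map_zero]
  exact ⟨φ ∘ₗ U.mkQ, hU, fun i => ⟨fun h => by_contra fun hi => hφ ⟨i, hi⟩ h, hU _⟩⟩

/-- A transversal of nonzero entries exists in the transition matrix between the two bases, since
its determinant does not vanish. -/
theorem exists_equiv_repr_ne_zero {κ : Type*} [Finite ι] (b : Basis ι K V)
    (b' : Basis κ K V) : ∃ π : ι ≃ κ, ∀ i, b.repr (b' (π i)) i ≠ 0 := by
  classical
  have := Fintype.ofFinite ι
  let e := b'.indexEquiv b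
  have hdet : (b.toMatrix (b'.reindex e)).det ≠ 0 := (b.isUnit_det (b'.reindex e)).ne_zero
  rw [Matrix.det_apply] at hdet
  obtain ⟨τ, -, hτ⟩ := Finset.exists_ne_zero_of_sum_ne_zero hdet
  have hprod := right_ne_zero_of_smul hτ
  rw [Finset.prod_ne_zero_iff] at hprod
  refine ⟨τ.symm.trans e.symm, fun i => ?_⟩
  simpa [Basis.toMatrix_apply] using hprod (τ.symm i) (Finset.mem_univ _)

theorem exists_equiv_dual_apply_ne_zero {κ : Type*} [Finite ι] {v : ι → V} {w : κ → V}
    (hv : LinearIndependent K v) (hw : LinearIndependent K w)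
    (hvw : Submodule.span K (Set.range v) = Submodule.span K (Set.range w)) :
    ∃ (π : ι ≃ κ) (φ : ι → Dual K V),
      (∀ i, φ i (v i) = 1) ∧ (∀ i j, i ≠ j → φ i (v j) = 0) ∧ ∀ i, φ i (w (π i)) ≠ 0 := by
  let b := Basis.span hv
  let b' := (Basis.span hw).map (LinearEquiv.ofEq _ _ hvw.symm)
  obtain ⟨π, hπ⟩ := exists_equiv_repr_ne_zero b b'
  choose φ hφ using fun i => LinearMap.exists_extend (b.coord i)
  have hφ' (i : ι) (x : Submodule.span K (Set.range v)) : φ i x = b.repr x i :=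
    LinearMap.congr_fun (hφ i) x
  have hv' (j : ι) : v j = b j := congrArg Subtype.val (Basis.span_apply hv j).symm
  have hw' (j : κ) : w j = b' j := congrArg Subtype.val (Basis.span_apply hw j).symm
  refine ⟨π, φ, fun i => ?_, fun i j hij => ?_, fun i => ?_⟩
  · rw [hv', hφ', b.repr_self, Finsupp.single_eq_same]
  · rw [hv', hφ', b.repr_self, Finsupp.single_eq_of_ne hij]
  · rw [hw', hφ']
    exact hπ i

end LinearAlgebra

section Pencil

open Module

variable {K ι W₁ W₂ : Type*} [Field K] [Fintype ι] [AddCommGroup W₁] [Module K W₁]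
  [AddCommGroup W₂] [Module K W₂]

/-- `HasRankBound L E t`: a linear combination of the maps `E i` has rank at least the total weight
`L` of any `t` or fewer indices with nonzero coefficient. -/
def HasRankBound (L : ι → ℕ) (E : ι → W₁ →ₗ[K] W₂) (t : ℕ) : Prop :=
  ∀ (y : ι → K) (T : Finset ι), (∀ i ∈ T, y i ≠ 0) → T.card ≤ t →
    ∑ i ∈ T, L i ≤ finrank K (LinearMap.range (∑ i, y i • E i))

namespace HasRankBound

variable {L : ι → ℕ} {E : ι → W₁ →ₗ[K] W₂} {t : ℕ}

theorem mono (h : HasRankBound L E t) {s : ℕ} (hst : s ≤ t) : HasRankBound L E s :=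
  fun y T hy hT => h y T hy (hT.trans hst)

theorem comp_injective (h : HasRankBound L E t) {κ : Type*} [Fintype κ] {f : κ → ι}
    (hf : Function.Injective f) : HasRankBound (L ∘ f) (E ∘ f) t := by
  classical
  intro y T hy hT
  have hsum : ∑ i, Function.extend f y 0 i • E i = ∑ j, y j • E (f j) :=
    (Fintype.sum_of_injective f hf _ _
      (fun i hi => by rw [Function.extend_apply' _ _ _ hi, Pi.zero_apply, zero_smul])
      fun j => by rw [hf.extend_apply]).symm
  have hrank := h (Function.extend f y 0) (T.map ⟨f, hf⟩)
    (by simpa [hf.extend_apply] using hy) (by rwa [Finset.card_map])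
  rwa [Finset.sum_map, hsum] at hrank

theorem linearIndependent (h : HasRankBound L E t) (hL : ∀ i, 1 ≤ L i) (ht : 1 ≤ t) :
    LinearIndependent K E := by
  rw [Fintype.linearIndependent_iff]
  intro y hy i
  by_contra hi
  have hrank := h y {i} (by simpa using hi) (by simpa using ht)
  rw [hy, LinearMap.range_zero, finrank_bot, Finset.sum_singleton] at hrank
  exact absurd (hL i) (by lia)

theorem eq_smul_of_finrank_le (h : HasRankBound L E t) (hL : ∀ i, 1 ≤ L i) (ht : 2 ≤ t)
    {F : W₁ →ₗ[K] W₂} {y : ι → K} (hF : F = ∑ i, y i • E i) {i : ι} (hi : y i ≠ 0)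
    (hrank : finrank K (LinearMap.range F) ≤ L i) : F = y i • E i := by
  classical
  rw [hF]
  refine Fintype.sum_eq_single i fun j hj => ?_
  suffices y j = 0 by rw [this, zero_smul]
  by_contra hyj
  have hpair := h y {i, j} (by simp [hi, hyj]) (Finset.card_le_two.trans ht)
  rw [Finset.sum_pair hj.symm, ← hF] at hpair
  exact absurd (hL j) (by lia)

end HasRankBound

/-- The ranks force the ranges of the `E i` to be independent, hence images of projections that
annihilate each other. -/
theorem exists_projections [FiniteDimensional K W₂] {L : ι → ℕ} {E : ι → W₁ →ₗ[K] W₂}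
    (hE : ∀ i, finrank K (LinearMap.range (E i)) ≤ L i)
    (hsum : ∑ i, L i ≤ finrank K (LinearMap.range (∑ i, E i))) :
    ∃ p : ι → Module.End K W₂, (∀ i x, p i (E i x) = E i x) ∧
      ∀ i j, i ≠ j → ∀ x, p i (E j x) = 0 := by
  classical
  let R (i : ι) := LinearMap.range (E i)
  let H (i : ι) := (Finset.univ.erase i).sup R
  have hdisj (i : ι) : Disjoint (H i) (R i) := by
    have hle : LinearMap.range (∑ i, E i) ≤ H i ⊔ R i := by
      rw [sup_comm, ← Finset.sup_insert, Finset.insert_erase (Finset.mem_univ i)]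
      simpa using range_sum_smul_le_sup E 1 Finset.univ
    have hH : finrank K (H i) ≤ ∑ j ∈ Finset.univ.erase i, L j :=
      (finrank_finset_sup_le_sum _ _).trans (Finset.sum_le_sum fun j _ => hE j)
    have htotal := Finset.add_sum_erase Finset.univ L (Finset.mem_univ i)
    have hdim := Submodule.finrank_sup_add_finrank_inf_eq (H i) (R i)
    have := Submodule.finrank_mono hle
    have hR : finrank K (R i) ≤ L i := hE i
    rw [disjoint_iff, ← Submodule.finrank_eq_zero (R := K)]
    omega
  choose N hHN hN using fun i => (hdisj i).exists_isCompl
  refine ⟨fun i => (R i).projection (N i) (hN i).symm, fun i x => ?_, fun i j hij x => ?_⟩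
  · exact Submodule.projection_apply_of_mem_left _ ⟨x, rfl⟩
  · exact (Submodule.projection_apply_eq_zero_iff _).2 (hHN i (Finset.le_sup (f := R)
      (Finset.mem_erase.2 ⟨hij.symm, Finset.mem_univ _⟩) ⟨x, rfl⟩))

/-- Both `∑ i, y i • E i` and the span of the ranges of the `G i` have the largest possible rank. -/
theorem HasRankBound.range_le_sup [FiniteDimensional K W₂] [DecidableEq K] {L : ι → ℕ}
    {E G : ι → W₁ →ₗ[K] W₂} (h : HasRankBound L E (Fintype.card ι))
    (hG : ∀ i, finrank K (LinearMap.range (G i)) ≤ L i) {y : ι → K}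
    (hy : ∑ i, y i • E i = ∑ i, y i • G i) {j : ι} (hj : y j ≠ 0) :
    LinearMap.range (G j) ≤ ({i | y i ≠ 0} : Finset ι).sup fun i => LinearMap.range (E i) := by
  let T : Finset ι := {i | y i ≠ 0}
  have hT (F : ι → W₁ →ₗ[K] W₂) : ∑ i, y i • F i = ∑ i ∈ T, y i • F i :=
    (Finset.sum_filter_of_ne fun i _ hi => left_ne_zero_of_smul hi).symm
  have hrank := h y T (fun i hi => (Finset.mem_filter.1 hi).2) T.card_le_univ
  have hsup : finrank K (T.sup fun i => LinearMap.range (G i) : Submodule K W₂) ≤ ∑ i ∈ T, L i :=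
    (finrank_finset_sup_le_sum _ T).trans (Finset.sum_le_sum fun i _ => hG i)
  have heq := Submodule.eq_of_le_of_finrank_le (range_sum_smul_le_sup G y T)
    (by rw [← hT, ← hy]; exact hsup.trans hrank)
  calc LinearMap.range (G j) ≤ T.sup fun i => LinearMap.range (G i) :=
        Finset.le_sup (f := fun i => LinearMap.range (G i)) (by simpa [T] using hj)
    _ = LinearMap.range (∑ i ∈ T, y i • E i) := by rw [← heq, ← hT, ← hT, hy]
    _ ≤ T.sup fun i => LinearMap.range (E i) := range_sum_smul_le_sup E y T

theorem HasRankBound.eq_of_forall_sum_smul_eq [FiniteDimensional K W₂] {L : ι → ℕ}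
    {E G : ι → W₁ →ₗ[K] W₂} (h : HasRankBound L E (Fintype.card ι))
    (hE : ∀ i, finrank K (LinearMap.range (E i)) ≤ L i)
    (hG : ∀ i, finrank K (LinearMap.range (G i)) ≤ L i) (Y : Set (ι → K))
    (hY : ∀ y ∈ Y, ∑ i, y i • E i = ∑ i, y i • G i) (hne : ∃ y ∈ Y, ∀ i, y i ≠ 0)
    (hzero : ∀ j, ∃ y ∈ Y, ∀ i, y i = 0 ↔ i = j) : E = G := by
  classical
  have hone : ∑ i, (1 : K) • E i = ∑ i, E i := Finset.sum_congr rfl fun i _ => one_smul K _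
  obtain ⟨p, hpE, hpE0⟩ := exists_projections hE
    (hone ▸ h (fun _ => 1) Finset.univ (fun _ _ => one_ne_zero) le_rfl)
  obtain ⟨y, hyY, hy⟩ := hne
  have hpG (i j : ι) (hij : i ≠ j) (x : W₁) : p i (G j x) = 0 := by
    obtain ⟨z, hzY, hz⟩ := hzero i
    have hker : ({q | z q ≠ 0} : Finset ι).sup (fun q => LinearMap.range (E q)) ≤
        LinearMap.ker (p i) := by
      refine Finset.sup_le fun q hq => ?_
      rintro _ ⟨w, rfl⟩
      exact hpE0 i q (by rintro rfl; simp [hz] at hq) w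
    exact hker (h.range_le_sup hG (hY z hzY) (mt (hz j).1 hij.symm) ⟨x, rfl⟩)
  have hpGE (j : ι) (x : W₁) : p j (G j x) = E j x := by
    have hyx := congrArg (p j) (LinearMap.congr_fun (hY y hyY) x)
    simp only [LinearMap.sum_apply, LinearMap.smul_apply, map_sum, map_smul] at hyx
    rw [Fintype.sum_eq_single j fun i hi => by rw [hpE0 j i hi.symm, smul_zero],
      Fintype.sum_eq_single j fun i hi => by rw [hpG j i hi.symm, smul_zero], hpE] at hyx
    exact (smul_right_injective _ (hy j) hyx).symm
  have hid : ({i | y i ≠ 0} : Finset ι).sup (fun i => LinearMap.range (E i)) ≤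
      LinearMap.eqLocus (∑ q, p q) LinearMap.id := by
    refine Finset.sup_le fun i _ => ?_
    rintro _ ⟨x, rfl⟩
    rw [LinearMap.mem_eqLocus, LinearMap.sum_apply, LinearMap.id_apply,
      Fintype.sum_eq_single i fun q hq => hpE0 q i hq x, hpE]
  ext j x
  have hx : (∑ q, p q) (G j x) = G j x := hid (h.range_le_sup hG (hY y hyY) (hy j) ⟨x, rfl⟩)
  rw [← hx, LinearMap.sum_apply, Fintype.sum_eq_single j fun q hq => hpG q j hq x, hpGE]

end Pencil

section KRank

open Module

variable {K ι κ V : Type*} [Field K] [Fintype ι] [AddCommGroup V] [Module K V]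

/-- The vectors `v` are grouped into blocks by `b`, and any `k` of these blocks are jointly linearly
independent: the generalized k-rank is at least `k`. For `b = id` this says that the k-rank is at
least `k`. -/
def IsBlockIndep (K : Type*) {ι κ V : Type*} [Field K] [Fintype ι] [AddCommGroup V] [Module K V]
    (b : κ → ι) (v : κ → V) (k : ℕ) : Prop :=
  k ≤ Fintype.card ι ∧ ∀ s : Finset ι, s.card = k → LinearIndepOn K v (b ⁻¹' s)

open Classical in
/-- The set of indices of the vectors `c i` that lie in `U`, a flat of the matroid of `c`. -/
noncomputable def flat (c : ι → V) (U : Submodule K V) : Finset ι := {i | c i ∈ U}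

theorem mem_flat {c : ι → V} {U : Submodule K V} {i : ι} : i ∈ flat c U ↔ c i ∈ U := by
  simp [flat]

theorem flat_mono (c : ι → V) {U U' : Submodule K V} (h : U ≤ U') : flat c U ⊆ flat c U' :=
  fun _ hi => mem_flat.2 (h (mem_flat.1 hi))

namespace IsBlockIndep

theorem linearIndepOn {b : κ → ι} {v : κ → V} {k : ℕ} (h : IsBlockIndep K b v k) {s : Finset ι}
    (hs : s.card ≤ k) : LinearIndepOn K v (b ⁻¹' s) := by
  obtain ⟨u, hsu, -, hu⟩ := Finset.exists_subsuperset_card_eq (Finset.subset_univ s) hs h.1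
  exact (h.2 u hu).mono (Set.preimage_mono (Finset.coe_subset.2 hsu))

variable {c : ι → V} {n : ℕ}

theorem card_flat_le (hc : IsBlockIndep K id c n) {U : Submodule K V} [FiniteDimensional K U]
    (hU : finrank K U < n) : (flat c U).card ≤ finrank K U := by
  by_contra! hlt
  obtain ⟨s, hs, hcard⟩ := Finset.exists_subset_card_eq (Nat.succ_le_of_lt hlt)
  have hind : LinearIndependent K fun i : s => c i := hc.linearIndepOn (by lia : s.card ≤ n)
  have hmem : ∀ i : s, c i ∈ U := fun i => mem_flat.1 (hs i.2)
  have := LinearIndependent.fintype_card_le_finrank (b := fun i : s => (⟨c i, hmem i⟩ : U))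
    (LinearIndependent.of_comp U.subtype hind)
  rw [Fintype.card_coe] at this
  lia

theorem span_flat_eq (hc : IsBlockIndep K id c n) {U : Submodule K V} [FiniteDimensional K U]
    (hn : (flat c U).card ≤ n) (hU : finrank K U ≤ (flat c U).card) :
    Submodule.span K (c '' flat c U) = U := by
  refine Submodule.eq_of_le_of_finrank_le
    (Submodule.span_le.2 (Set.image_subset_iff.2 fun i hi => mem_flat.1 hi)) (hU.trans_eq ?_)
  have hind : LinearIndependent K fun i : flat c U => c i := hc.linearIndepOn hn
  have := finrank_span_eq_card hind
  rw [Fintype.card_coe] at this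
  rw [← this, Set.image_eq_range]
  rfl

theorem card_flat_span_le (hc : IsBlockIndep K id c n) (v : ι → V) {s : Finset ι}
    (hs : s.card < n) : (flat c (Submodule.span K (v '' s))).card ≤ s.card := by
  have hdim := finrank_span_image_le_card (K := K) v s
  have : FiniteDimensional K (Submodule.span K (v '' s)) :=
    FiniteDimensional.span_of_finite K (s.finite_toSet.image v)
  exact (hc.card_flat_le (by lia)).trans hdim

end IsBlockIndep

theorem sum_flat_sdiff [DecidableEq ι] (c : ι → V) (L : ι → ℕ) (U : Submodule K V)
    (𝒰 : Finset (Submodule K V)) (h : ∀ X ∈ 𝒰, ∀ Y ∈ 𝒰, X ≠ Y → X ⊓ Y ≤ U) :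
    ∑ X ∈ 𝒰, ∑ i ∈ flat c X \ flat c U, L i = ∑ i ∈ 𝒰.biUnion (flat c) \ flat c U, L i := by
  have hunion : 𝒰.biUnion (flat c) \ flat c U = 𝒰.biUnion fun X => flat c X \ flat c U := by
    ext i
    simp only [Finset.mem_sdiff, Finset.mem_biUnion]
    tauto
  rw [hunion, Finset.sum_biUnion]
  intro X hX Y hY hXY
  refine Finset.disjoint_left.2 fun i hiX hiY => ?_
  simp only [Finset.mem_sdiff, mem_flat] at hiX hiY
  exact hiX.2 (h X hX Y hY hXY ⟨hiX.1, hiY.1⟩)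

end KRank

section Matching

open Module Submodule

variable {K ι V W₁ W₂ : Type*} [Field K] [Fintype ι] [AddCommGroup V] [Module K V]
  [AddCommGroup W₁] [Module K W₁] [AddCommGroup W₂] [Module K W₂]

/-- Every set `N` that contains a flat of `c` and has at least `n - 2` elements outweighs the
corresponding flat of `d`. -/
def DominatesFlats (K : Type*) [Field K] [Module K V] (L : ι → ℕ) (c d : ι → V) (n : ℕ) :
    Prop :=
  ∀ (U : Submodule K V) (N : Finset ι), flat c U ⊆ N → n ≤ N.card + 2 →
    ∑ i ∈ flat d U, L i ≤ ∑ i ∈ N, L i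

/-- Compare the ranks of both sides at a generic `φ` vanishing on `U`. -/
theorem HasRankBound.dominatesFlats [Infinite K] [FiniteDimensional K W₂] {L : ι → ℕ}
    {E E' : ι → W₁ →ₗ[K] W₂} {t n : ℕ} (h : HasRankBound L E t) (hnt : Fintype.card ι + 2 ≤ n + t)
    (hE' : ∀ i, finrank K (LinearMap.range (E' i)) ≤ L i) {c d : ι → V}
    (heq : ∀ φ : Dual K V, ∑ i, φ (c i) • E i = ∑ i, φ (d i) • E' i) :
    DominatesFlats K L c d n := by
  classical
  intro U N hN hn
  obtain ⟨φ, -, hφ⟩ := exists_dual_ker_le_apply_eq_zero_iff U (Sum.elim c d)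
  have hlower := h (fun i => φ (c i)) Nᶜ
    (fun i hi h0 => Finset.mem_compl.1 hi (hN (mem_flat.2 ((hφ (.inl i)).1 h0))))
    (by have := Finset.card_add_card_compl N; lia)
  have hsum : ∑ i, φ (d i) • E' i = ∑ i ∈ (flat d U)ᶜ, φ (d i) • E' i :=
    (Finset.sum_subset (Finset.subset_univ _) fun i _ hi => by
      rw [Finset.notMem_compl, mem_flat] at hi
      have h0 : φ (d i) = 0 := (hφ (.inr i)).2 hi
      rw [h0, zero_smul]).symm
  have hupper := (finrank_range_sum_smul_le E' (fun i => φ (d i)) (flat d U)ᶜ).trans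
    (Finset.sum_le_sum fun i _ => hE' i)
  rw [heq φ, hsum] at hlower
  have hN := Finset.sum_add_sum_compl N L
  have hU := Finset.sum_add_sum_compl (flat d U) L
  lia

/-- By the exchange property, two hyperplanes over `span K s` meet in it or coincide. -/
theorem span_insert_inf_le_of_ne {s : Set V} {x y : V}
    (hxy : span K (insert x s) ≠ span K (insert y s)) :
    span K (insert x s) ⊓ span K (insert y s) ≤ span K s := by
  rintro z ⟨hzx, hzy⟩
  by_contra hz
  have heq {w : V} (hw : z ∈ span K (insert w s)) : span K (insert w s) = span K (insert z s) := by
    refine le_antisymm (span_le.2 (Set.insert_subset (mem_span_insert_exchange hw hz) ?_))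
      (span_le.2 (Set.insert_subset hw ?_)) <;>
    exact (Set.subset_insert _ s).trans subset_span
  exact hxy ((heq hzx).trans (heq hzy).symm)

/-- Among the index sets of at most its cardinality, `S` has the largest weight `L`. -/
def IsHeaviest {ι : Type*} (L : ι → ℕ) (S : Finset ι) : Prop :=
  ∀ T : Finset ι, T.card ≤ S.card → ∑ i ∈ T, L i ≤ ∑ i ∈ S, L i

theorem exists_isHeaviest (L : ι → ℕ) {k : ℕ} (hk : k ≤ Fintype.card ι) :
    ∃ S : Finset ι, S.card = k ∧ IsHeaviest L S := by
  obtain ⟨S, hS, hmax⟩ := Finset.exists_max_image (Finset.powersetCard k Finset.univ)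
    (fun T => ∑ i ∈ T, L i) (Finset.powersetCard_nonempty.2 hk)
  rw [Finset.mem_powersetCard_univ] at hS
  refine ⟨S, hS, fun T hT => ?_⟩
  obtain ⟨N, hN, -, hcard⟩ := Finset.exists_subsuperset_card_eq (Finset.subset_univ T)
    (hT.trans_eq hS) hk
  exact (Finset.sum_le_sum_of_subset hN).trans (hmax N (Finset.mem_powersetCard_univ.2 hcard))

open Classical in
/-- The spans of the vectors `v i` with `i ∈ S` together with one more vector of the family: the
subspaces that cover `span K (v '' S)` in the lattice of flats. -/
noncomputable def coveringSpans (K : Type*) [Field K] [Module K V] (v : ι → V) (S : Finset ι) :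
    Finset (Submodule K V) :=
  Sᶜ.image fun i => span K (insert (v i) (v '' S))

theorem mem_coveringSpans {v : ι → V} {S : Finset ι} {X : Submodule K V} :
    X ∈ coveringSpans K v S ↔ ∃ i ∉ S, span K (insert (v i) (v '' S)) = X := by
  simp [coveringSpans]

theorem span_le_of_mem_coveringSpans {v : ι → V} {S : Finset ι} {X : Submodule K V}
    (hX : X ∈ coveringSpans K v S) : span K (v '' S) ≤ X := by
  obtain ⟨i, -, rfl⟩ := mem_coveringSpans.1 hX
  exact span_mono (Set.subset_insert _ _)

theorem inf_le_of_mem_coveringSpans {v : ι → V} {S : Finset ι} {X Y : Submodule K V}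
    (hX : X ∈ coveringSpans K v S) (hY : Y ∈ coveringSpans K v S) (hXY : X ≠ Y) :
    X ⊓ Y ≤ span K (v '' S) := by
  obtain ⟨i, -, rfl⟩ := mem_coveringSpans.1 hX
  obtain ⟨j, -, rfl⟩ := mem_coveringSpans.1 hY
  exact span_insert_inf_le_of_ne hXY

theorem insert_subset_flat_span_insert [DecidableEq ι] (v : ι → V) (i : ι) (S : Finset ι) :
    insert i S ⊆ flat v (span K (insert (v i) (v '' S))) := fun j hj => by
  rw [mem_flat, ← Set.image_insert_eq, ← Finset.coe_insert]
  exact subset_span (Set.mem_image_of_mem v hj)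

namespace DominatesFlats

variable {L : ι → ℕ} {c d : ι → V} {n : ℕ} {S : Finset ι}
  (h : DominatesFlats K L c d n) (hL : ∀ i, 1 ≤ L i) (hn : S.card + 2 = n) (hS : IsHeaviest L S)
  (hc : IsBlockIndep K id c n)

include h hL hn hS

/-- A smaller flat of `c` could be padded to a set of `n - 2` indices, which is lighter than
`insert i S`. -/
theorem le_card_flat_span_insert {i : ι} (hi : i ∉ S) :
    n ≤ (flat c (span K (insert (d i) (d '' S)))).card + 1 := by
  classical
  by_contra! hlt
  obtain ⟨N, hN, -, hcard⟩ := Finset.exists_subsuperset_card_eq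
    (Finset.subset_univ (flat c (span K (insert (d i) (d '' S))))) (by lia : _ ≤ S.card)
    S.card_le_univ
  have hlight := calc
    ∑ j ∈ insert i S, L j ≤ ∑ j ∈ N, L j :=
      (Finset.sum_le_sum_of_subset (insert_subset_flat_span_insert d i S)).trans
        (h _ N hN (by lia))
    _ ≤ ∑ j ∈ S, L j := hS N hcard.le
  rw [Finset.sum_insert hi] at hlight
  exact absurd (hL i) (by lia)

include hc

theorem finrank_span_insert {i : ι} (hi : i ∉ S) :
    finrank K (span K (insert (d i) (d '' S))) + 1 = n ∧
      (flat c (span K (insert (d i) (d '' S)))).card + 1 = n := by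
  classical
  have hle := finrank_span_image_le_card (K := K) d (insert i S)
  rw [Finset.card_insert_of_notMem hi, Finset.coe_insert, Set.image_insert_eq] at hle
  have : FiniteDimensional K (span K (insert (d i) (d '' S))) :=
    FiniteDimensional.span_of_finite K ((S.finite_toSet.image d).insert _)
  have := hc.card_flat_le (hle.trans_lt (by lia))
  have := h.le_card_flat_span_insert hL hn hS hi
  lia

theorem linearIndepOn_insert {i : ι} (hi : i ∉ S) :
    LinearIndepOn K d (insert i (S : Set ι)) := by
  classical
  have hdim := (h.finrank_span_insert hL hn hS hc hi).1
  rw [← Finset.coe_insert]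
  refine linearIndependent_iff_card_le_finrank_span.2 ?_
  rw [← Set.image_insert_eq, ← Finset.coe_insert, Set.image_eq_range] at hdim
  have hcard := Fintype.card_coe (insert i S)
  rw [Finset.card_insert_of_notMem hi] at hcard
  change Fintype.card ↥(insert i S) ≤ finrank K _
  lia

theorem notMem_span {i : ι} (hi : i ∉ S) :
    d i ∉ span K (d '' S) :=
  ((_root_.linearIndepOn_insert (Finset.mem_coe.not.2 hi)).1
    (h.linearIndepOn_insert hL hn hS hc hi)).2

theorem flat_span_eq : flat d (span K (d '' S)) = S := by
  ext i
  rw [mem_flat]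
  exact ⟨fun hi => by_contra fun hiS => h.notMem_span hL hn hS hc hiS hi,
    fun hi => subset_span (Set.mem_image_of_mem d hi)⟩

theorem sum_compl_add_card_mul_le [DecidableEq ι] :
    ∑ i ∈ Sᶜ, L i + (coveringSpans K d S).card * ∑ i ∈ S, L i ≤
      ∑ i ∈ (coveringSpans K d S).biUnion (flat c) \ flat c (span K (d '' S)), L i +
        (coveringSpans K d S).card * ∑ i ∈ flat c (span K (d '' S)), L i := by
  have hflat := h.flat_span_eq hL hn hS hc
  have hX (X) (hX : X ∈ coveringSpans K d S) :
      ∑ i ∈ flat d X \ flat d (span K (d '' S)), L i + ∑ i ∈ S, L i ≤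
        ∑ i ∈ flat c X \ flat c (span K (d '' S)), L i +
          ∑ i ∈ flat c (span K (d '' S)), L i := by
    have hle := span_le_of_mem_coveringSpans hX
    have hsplit := Finset.sum_sdiff (f := L) (flat_mono d hle)
    rw [Finset.sum_sdiff (flat_mono c hle)]
    obtain ⟨i, hi, rfl⟩ := mem_coveringSpans.1 hX
    have := h.le_card_flat_span_insert hL hn hS hi
    rw [hflat] at hsplit ⊢
    exact hsplit.trans_le (h _ _ subset_rfl (by lia))
  have hcover : (coveringSpans K d S).biUnion (flat d) \ flat d (span K (d '' S)) = Sᶜ := by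
    ext i
    simp only [hflat, Finset.mem_sdiff, Finset.mem_biUnion, Finset.mem_compl, mem_flat,
      and_iff_right_iff_imp]
    exact fun hi => ⟨_, mem_coveringSpans.2 ⟨i, hi, rfl⟩, subset_span (Set.mem_insert _ _)⟩
  have hsum := Finset.sum_le_sum hX
  have hmeet : ∀ X ∈ coveringSpans K d S, ∀ Y ∈ coveringSpans K d S, X ≠ Y →
      X ⊓ Y ≤ span K (d '' S) := fun X hX Y hY => inf_le_of_mem_coveringSpans hX hY
  simp only [Finset.sum_add_distrib, Finset.sum_const, smul_eq_mul] at hsum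
  rwa [sum_flat_sdiff d L _ _ hmeet, sum_flat_sdiff c L _ _ hmeet, hcover] at hsum

/-- If there were only one, it would contain all of `d`, hence all of `c`. -/
theorem one_lt_card_coveringSpans : 1 < (coveringSpans K d S).card := by
  by_contra! hle
  have hcard := hc.1
  obtain ⟨i, -, hi⟩ := Finset.exists_mem_notMem_of_card_lt_card
    (by rw [Finset.card_univ]; lia : S.card < (Finset.univ : Finset ι).card)
  let X := span K (insert (d i) (d '' S))
  have hX : X ∈ coveringSpans K d S := mem_coveringSpans.2 ⟨i, hi, rfl⟩
  have hdX : flat d X = Finset.univ := Finset.eq_univ_of_forall fun j => by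
    rw [mem_flat]
    by_cases hj : j ∈ S
    · exact subset_span (Set.mem_insert_of_mem _ (Set.mem_image_of_mem d hj))
    · have hjX := Finset.card_le_one.1 hle _ (mem_coveringSpans.2 ⟨j, hj, rfl⟩) _ hX
      exact hjX ▸ subset_span (Set.mem_insert _ _)
  have hflat := (h.finrank_span_insert hL hn hS hc hi).2
  obtain ⟨j, hjuniv, hj⟩ := Finset.exists_mem_notMem_of_card_lt_card
    (by rw [Finset.card_univ]; lia : (flat c X).card < (Finset.univ : Finset ι).card)
  have hlt := Finset.sum_lt_sum_of_subset (f := L) (Finset.subset_univ (flat c X)) hjuniv hj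
    (hL j) fun _ _ _ => Nat.zero_le _
  rw [← hdX] at hlt
  exact absurd (h X _ subset_rfl (by lia)) hlt.not_ge

/-- Two or more covering spans leave room for equality only: the weights of `S` and of the flat of
`c` differ by as much as those of their complements. -/
theorem sum_flat_span_eq_and_subset_biUnion [DecidableEq ι] :
    ∑ i ∈ flat c (span K (d '' S)), L i = ∑ i ∈ S, L i ∧
      (flat c (span K (d '' S)))ᶜ ⊆ (coveringSpans K d S).biUnion (flat c) := by
  set D := flat c (span K (d '' S))
  set C := (coveringSpans K d S).biUnion (flat c)
  have hsum := h.sum_compl_add_card_mul_le hL hn hS hc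
  have hcard := h.one_lt_card_coveringSpans hL hn hS hc
  have hDS : ∑ i ∈ D, L i ≤ ∑ i ∈ S, L i := hS _ (hc.card_flat_span_le d (by lia))
  have hCD : C \ D ⊆ Dᶜ := fun i hi => Finset.mem_compl.2 (Finset.mem_sdiff.1 hi).2
  have hw : ∑ i ∈ C \ D, L i ≤ ∑ i ∈ Dᶜ, L i := Finset.sum_le_sum_of_subset hCD
  have htotal : ∑ i ∈ S, L i + ∑ i ∈ Sᶜ, L i = ∑ i ∈ D, L i + ∑ i ∈ Dᶜ, L i := by
    rw [Finset.sum_add_sum_compl, Finset.sum_add_sum_compl]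
  have heq : ∑ i ∈ D, L i = ∑ i ∈ S, L i := by nlinarith
  rw [heq] at hsum
  refine ⟨heq, fun i hi => by_contra fun hiC => ?_⟩
  have := Finset.sum_lt_sum_of_subset hCD hi (fun hi => hiC (Finset.mem_sdiff.1 hi).1) (hL i)
    fun _ _ _ => Nat.zero_le _
  lia

theorem card_flat_span_eq : (flat c (span K (d '' S))).card = S.card := by
  classical
  have hle := hc.card_flat_span_le d (by lia : S.card < n)
  obtain ⟨N, hN, -, hNcard⟩ := Finset.exists_subsuperset_card_eq
    (Finset.subset_univ _) hle S.card_le_univ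
  by_contra hne
  obtain ⟨i, hi, hiD⟩ := Finset.exists_mem_notMem_of_card_lt_card
    (by lia : (flat c (span K (d '' S))).card < N.card)
  have hlt := Finset.sum_lt_sum_of_subset hN hi hiD (hL i) fun _ _ _ => Nat.zero_le _
  rw [(h.sum_flat_span_eq_and_subset_biUnion hL hn hS hc).1] at hlt
  exact absurd (hS N hNcard.le) hlt.not_ge

theorem exists_mem_span_insert_iff {i : ι} (hi : i ∉ S) :
    ∃ q ∉ flat c (span K (d '' S)), ∀ p ∉ flat c (span K (d '' S)),
      c p ∈ span K (insert (d i) (d '' S)) ↔ p = q := by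
  classical
  have hsub := flat_mono c (span_mono (Set.subset_insert (d i) (d '' S)) :
    span K (d '' S) ≤ span K (insert (d i) (d '' S)))
  have hcard := Finset.card_sdiff_add_card_eq_card hsub
  have hD := h.card_flat_span_eq hL hn hS hc
  have hX := (h.finrank_span_insert hL hn hS hc hi).2
  obtain ⟨q, hq⟩ := Finset.card_eq_one.1 (by lia : (flat c (span K (insert (d i) (d '' S))) \
    flat c (span K (d '' S))).card = 1)
  have hmem (p : ι) := Finset.ext_iff.1 hq p
  simp only [Finset.mem_sdiff, Finset.mem_singleton, mem_flat] at hmem ⊢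
  exact ⟨q, ((hmem q).2 rfl).2, fun p hp => by rw [← hmem p, and_iff_left hp]⟩

theorem le_of_forall_mem_span_insert {i q : ι} (hi : i ∉ S)
    (hqD : q ∉ flat c (span K (d '' S)))
    (hq : ∀ p ∉ flat c (span K (d '' S)), c p ∈ span K (insert (d i) (d '' S)) → p = q) :
    L i ≤ L q := by
  classical
  have hsub : flat c (span K (insert (d i) (d '' S))) ⊆ insert q (flat c (span K (d '' S))) :=
    fun p hp => Finset.mem_insert.2 (or_iff_not_imp_right.2 fun hpD => hq p hpD (mem_flat.1 hp))
  have hcard := Finset.card_le_card (Finset.subset_insert q (flat c (span K (d '' S))))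
  rw [h.card_flat_span_eq hL hn hS hc] at hcard
  have hweight := calc
    ∑ j ∈ insert i S, L j ≤ ∑ p ∈ insert q (flat c (span K (d '' S))), L p :=
      (Finset.sum_le_sum_of_subset (insert_subset_flat_span_insert d i S)).trans
        (h _ _ hsub (by lia))
    _ = L q + ∑ j ∈ S, L j := by
      rw [Finset.sum_insert hqD, (h.sum_flat_span_eq_and_subset_biUnion hL hn hS hc).1]
  rw [Finset.sum_insert hi] at hweight
  lia

theorem exists_equiv_compl :
    ∃ f : {i // i ∉ S} ≃ {q // q ∉ flat c (span K (d '' S))}, ∀ i, L (f i) = L i ∧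
      ∀ p : {q // q ∉ flat c (span K (d '' S))},
        c p ∈ span K (insert (d i) (d '' S)) ↔ p = f i := by
  classical
  obtain ⟨hweight, hcover⟩ := h.sum_flat_span_eq_and_subset_biUnion hL hn hS hc
  choose f hfD hf using fun i : {i // i ∉ S} => h.exists_mem_span_insert_iff hL hn hS hc i.2
  let g (i : {i // i ∉ S}) : {q // q ∉ flat c (span K (d '' S))} := ⟨f i, hfD i⟩
  have hsurj : Function.Surjective g := fun q => by
    obtain ⟨X, hX, hq⟩ := Finset.mem_biUnion.1 (hcover (Finset.mem_compl.2 q.2))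
    obtain ⟨i, hi, rfl⟩ := mem_coveringSpans.1 hX
    exact ⟨⟨i, hi⟩, Subtype.ext ((hf ⟨i, hi⟩ q q.2).1 (mem_flat.1 hq)).symm⟩
  have hcard : Fintype.card {i // i ∉ S} = Fintype.card {q // q ∉ flat c (span K (d '' S))} := by
    simp only [Fintype.card_subtype_compl, Fintype.card_coe, h.card_flat_span_eq hL hn hS hc]
  let e := Equiv.ofBijective g ((Fintype.bijective_iff_surjective_and_card g).2 ⟨hsurj, hcard⟩)
  have hle (i : {i // i ∉ S}) : L i ≤ L (e i) :=
    h.le_of_forall_mem_span_insert hL hn hS hc i.2 (hfD i) fun p hp => (hf i p hp).1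
  have hsum : ∑ i : {i // i ∉ S}, L i = ∑ i : {i // i ∉ S}, L (e i) := by
    rw [Equiv.sum_comp e fun q => L q, ← Finset.sum_subtype Sᶜ fun i => Finset.mem_compl,
      ← Finset.sum_subtype (flat c _)ᶜ fun i => Finset.mem_compl]
    have := Finset.sum_add_sum_compl S L
    have := Finset.sum_add_sum_compl (flat c (span K (d '' S))) L
    lia
  have heq := (Finset.sum_eq_sum_iff_of_le fun i _ => hle i).1 hsum
  exact ⟨e, fun i => ⟨(heq i (Finset.mem_univ i)).symm, fun p =>
    (hf i p p.2).trans (Subtype.ext_iff (a2 := e i)).symm⟩⟩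

end DominatesFlats

theorem sum_eq_sum_subtype_notMem {M : Type*} [AddCommMonoid M] [DecidableEq ι] {s : Finset ι}
    {F : ι → M} (h : ∀ i ∈ s, F i = 0) : ∑ i, F i = ∑ i : {i // i ∉ s}, F i :=
  (Fintype.sum_of_injective _ Subtype.val_injective _ F
    (fun i hi => h i (by simpa using hi)) fun _ => rfl).symm

theorem exists_sub_smul_mem {U : Submodule K V} {x y : V} (hx : x ∉ U)
    (hxy : x ∈ span K {y} ⊔ U) : ∃ a : K, a ≠ 0 ∧ x - a • y ∈ U := by
  obtain ⟨_, hz, u, hu, rfl⟩ := mem_sup.1 hxy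
  obtain ⟨a, rfl⟩ := mem_span_singleton.1 hz
  refine ⟨a, ?_, by rwa [add_sub_cancel_left]⟩
  rintro rfl
  exact hx (by rwa [zero_smul, zero_add])

/-- Functionals vanishing on `U` see only the terms outside `U`, and there the coefficients of
matched terms are proportional. -/
theorem sum_smul_eq_sum_smul_equiv_symm {M : Type*} [AddCommGroup M] [Module K M] [DecidableEq ι]
    {E E' : ι → M} {c d : ι → V} {U : Submodule K V} {S D : Finset ι} (hS : ∀ i ∈ S, d i ∈ U)
    (hD : ∀ q ∈ D, c q ∈ U) (f : {i // i ∉ S} ≃ {q // q ∉ D}) {a : {i // i ∉ S} → K}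
    (ha0 : ∀ i, a i ≠ 0) (ha : ∀ i, c (f i) - a i • d i ∈ U) {φ : Dual K V}
    (hφ : U ≤ LinearMap.ker φ) (heq : ∑ i, φ (c i) • E i = ∑ i, φ (d i) • E' i) :
    ∑ q : {q // q ∉ D}, φ (c q) • E q =
      ∑ q : {q // q ∉ D}, φ (c q) • (a (f.symm q))⁻¹ • E' (f.symm q) := by
  have hE (q) (hq : q ∈ D) : φ (c q) • E q = 0 := by
    rw [LinearMap.mem_ker.1 (hφ (hD q hq)), zero_smul]
  have hE' (i) (hi : i ∈ S) : φ (d i) • E' i = 0 := by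
    rw [LinearMap.mem_ker.1 (hφ (hS i hi)), zero_smul]
  have hterm (i : {i // i ∉ S}) : φ (d i) • E' i = φ (c (f i)) • (a i)⁻¹ • E' i := by
    have hφa : φ (c (f i)) = a i * φ (d i) := by
      rw [← smul_eq_mul, ← map_smul, ← sub_eq_zero, ← map_sub]
      exact hφ (ha i)
    rw [smul_smul, hφa, mul_right_comm, mul_inv_cancel₀ (ha0 i), one_mul]
  rw [← sum_eq_sum_subtype_notMem hE, heq, sum_eq_sum_subtype_notMem hE',
    ← f.sum_comp fun q => φ (c q) • (a (f.symm q))⁻¹ • E' (f.symm q)]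
  exact Finset.sum_congr rfl fun i _ => by rw [hterm, f.symm_apply_apply]

theorem eq_inv_smul_of_eq_smul_perm {M : Type*} [AddCommGroup M] [Module K M] {E E' : ι → M}
    {c d : ι → V} (hE : LinearIndependent K E) {σ : Equiv.Perm ι} {μ : ι → K}
    (hμ : ∀ i, μ i ≠ 0) (hE' : ∀ i, E' i = μ i • E (σ i))
    (heq : ∀ φ : Dual K V, ∑ i, φ (c i) • E i = ∑ i, φ (d i) • E' i) (i : ι) :
    d i = (μ i)⁻¹ • c (σ i) := by
  rw [eq_inv_smul_iff₀ (hμ i), ← sub_eq_zero, ← forall_dual_apply_eq_zero_iff K]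
  intro φ
  have hφ : ∑ i, φ (μ i • d i - c (σ i)) • E (σ i) = 0 := by
    simp only [map_sub, sub_smul, Finset.sum_sub_distrib, map_smul, smul_eq_mul, mul_comm (μ _),
      mul_smul, ← hE']
    rw [← heq, Equiv.sum_comp σ fun q => φ (c q) • E q, sub_self]
  exact Fintype.linearIndependent_iff.1 (hE.comp σ σ.injective) _ hφ i

theorem exists_eq_sum_smul {M : Type*} [AddCommGroup M] [Module K M] {E E' : ι → M}
    {c d : ι → V} {S D : Finset ι} {φ : Dual K V} {i : S} (hi : φ (d i) = 1)
    (hS : ∀ j ∈ S, j ≠ i → φ (d j) = 0) (hcompl : ∀ j ∉ S, ∃ q ∉ D, ∃ μ : K, E' j = μ • E q)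
    (heq : ∑ i, φ (c i) • E i = ∑ i, φ (d i) • E' i) :
    ∃ y : ι → K, (∀ q ∈ D, y q = φ (c q)) ∧ E' i = ∑ q, y q • E q := by
  classical
  have hmem : ∑ j ∈ Sᶜ, φ (d j) • E' j ∈ span K (E '' (Dᶜ : Set ι)) :=
    sum_mem fun j hj => smul_mem _ _ <| by
      obtain ⟨q, hq, μ, hμ⟩ := hcompl j (Finset.mem_compl.1 hj)
      rw [hμ]
      exact smul_mem _ _ (subset_span (Set.mem_image_of_mem E (Finset.mem_coe.not.2 hq)))
  obtain ⟨z, hzD, hz⟩ := (Finsupp.mem_span_image_iff_linearCombination K).1 hmem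
  rw [Finsupp.linearCombination_apply, Finsupp.sum_fintype z _ fun j => zero_smul K (E j)] at hz
  have hSi : ∑ j ∈ S, φ (d j) • E' j = E' i := by
    rw [Finset.sum_eq_single_of_mem i.1 i.2 fun j hj hji => by rw [hS j hj hji, zero_smul], hi,
      one_smul]
  refine ⟨fun q => φ (c q) - z q, fun q hq => ?_, ?_⟩
  · exact sub_eq_self.2 ((Finsupp.mem_supported' K z).1 hzD q (not_not.2 hq))
  · simp only [sub_smul, Finset.sum_sub_distrib]
    rw [heq, hz, ← Finset.sum_add_sum_compl S, hSi, add_sub_cancel_right]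

namespace HasRankBound

variable {L : ι → ℕ} {E E' : ι → W₁ →ₗ[K] W₂} {c d : ι → V} {t n : ℕ}

theorem exists_smul_of_equiv_compl [Infinite K] [FiniteDimensional K W₂] {U : Submodule K V}
    {S : Finset ι} (h : HasRankBound L E t) (ht : Fintype.card ι ≤ (flat c U).card + t)
    (hE : ∀ i, finrank K (LinearMap.range (E i)) ≤ L i)
    (hE' : ∀ i, finrank K (LinearMap.range (E' i)) ≤ L i)
    (heq : ∀ φ : Dual K V, ∑ i, φ (c i) • E i = ∑ i, φ (d i) • E' i)
    (hS : ∀ i ∈ S, d i ∈ U) (f : {i // i ∉ S} ≃ {q // q ∉ flat c U}) (hL : ∀ i, L (f i) = L i)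
    (hf : ∀ (i : {i // i ∉ S}) (p : {q // q ∉ flat c U}), c p ∈ span K {d i} ⊔ U ↔ p = f i)
    (i : {i // i ∉ S}) : ∃ μ : K, μ ≠ 0 ∧ E' i = μ • E (f i) := by
  classical
  choose a ha0 ha using fun i =>
    exists_sub_smul_mem (mt mem_flat.2 (f i).2) ((hf i _).2 rfl)
  let G (q : {q // q ∉ flat c U}) := (a (f.symm q))⁻¹ • E' (f.symm q)
  have hG (q) : finrank K (LinearMap.range (G q)) ≤ L q := by
    rw [LinearMap.range_smul _ _ (inv_ne_zero (ha0 _))]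
    exact (hE' _).trans_eq (by rw [← hL, f.apply_symm_apply])
  have hcard : Fintype.card {q // q ∉ flat c U} ≤ t := by
    rw [Fintype.card_subtype_compl, Fintype.card_coe]
    lia
  have hEG : (fun q : {q // q ∉ flat c U} => E q) = G := by
    refine ((h.comp_injective Subtype.val_injective).mono hcard).eq_of_forall_sum_smul_eq
      (fun q => hE q) hG {y | ∃ φ : Dual K V, U ≤ LinearMap.ker φ ∧ (fun q => φ (c q.1)) = y}
      ?_ ?_ fun q => ?_
    · rintro _ ⟨φ, hφ, rfl⟩
      exact sum_smul_eq_sum_smul_equiv_symm hS (fun q => mem_flat.1) f ha0 ha hφ (heq φ)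
    · obtain ⟨φ, hφ, hφc⟩ := exists_dual_ker_le_apply_eq_zero_iff U c
      exact ⟨_, ⟨φ, hφ, rfl⟩, fun q hq => q.2 (mem_flat.2 ((hφc q).1 hq))⟩
    · obtain ⟨φ, hφ, hφc⟩ :=
        exists_dual_ker_le_apply_eq_zero_iff (span K {d (f.symm q)} ⊔ U) c
      exact ⟨_, ⟨φ, le_sup_right.trans hφ, rfl⟩, fun p => by
        rw [hφc, hf, f.apply_symm_apply]⟩
  refine ⟨a i, ha0 i, ?_⟩
  have hi : E (f i) = G (f i) := congrFun hEG (f i)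
  rw [hi]
  simp only [G, f.symm_apply_apply, smul_inv_smul₀ (ha0 i)]

theorem exists_equiv_smul (h : HasRankBound L E t) (ht : 2 ≤ t) (hL : ∀ i, 1 ≤ L i)
    (hE' : ∀ i, finrank K (LinearMap.range (E' i)) ≤ L i)
    (heq : ∀ φ : Dual K V, ∑ i, φ (c i) • E i = ∑ i, φ (d i) • E' i) {S D : Finset ι}
    (hS : LinearIndepOn K d S) (hD : LinearIndepOn K c D)
    (hspan : span K (d '' S) = span K (c '' D)) (hw : ∑ i ∈ D, L i = ∑ i ∈ S, L i)
    (hcompl : ∀ j ∉ S, ∃ q ∉ D, ∃ μ : K, E' j = μ • E q) :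
    ∃ π : S ≃ D, ∀ i, L (π i) = L i ∧ ∃ μ : K, μ ≠ 0 ∧ E' i = μ • E (π i) := by
  classical
  rw [Set.image_eq_range, Set.image_eq_range] at hspan
  obtain ⟨(π : S ≃ D), (φ : S → Dual K V), hφ1, hφ0, hφπ⟩ :=
    exists_equiv_dual_apply_ne_zero hS hD hspan
  choose y hyπ hy using fun i : S => exists_eq_sum_smul (hφ1 i)
    (fun j hj hji => hφ0 i ⟨j, hj⟩ fun hij => hji (congrArg Subtype.val hij).symm) hcompl
    (heq (φ i))
  have hy0 (i : S) : y i (π i) ≠ 0 := hyπ i _ (π i).2 ▸ hφπ i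
  have hle (i : S) : L (π i) ≤ L i := by
    have := h (y i) {(π i).1} (by simpa using hy0 i) (by simpa using by lia)
    rw [Finset.sum_singleton, ← hy i] at this
    exact this.trans (hE' i)
  have hsum : ∑ i : S, L (π i) = ∑ i : S, L i := by
    rwa [π.sum_comp fun q : D => L q, Finset.sum_coe_sort, Finset.sum_coe_sort]
  have hLπ (i : S) := (Finset.sum_eq_sum_iff_of_le fun i _ => hle i).1 hsum i (Finset.mem_univ i)
  exact ⟨π, fun i => ⟨hLπ i, y i (π i), hy0 i,
    h.eq_smul_of_finrank_le hL ht (hy i) (hy0 i) ((hE' i).trans_eq (hLπ i).symm)⟩⟩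

theorem exists_perm_smul [Infinite K] [FiniteDimensional K W₂] (h : HasRankBound L E t)
    (hnt : Fintype.card ι + 2 ≤ n + t) (hn : 2 ≤ n) (hc : IsBlockIndep K id c n)
    (hL : ∀ i, 1 ≤ L i) (hE : ∀ i, finrank K (LinearMap.range (E i)) ≤ L i)
    (hE' : ∀ i, finrank K (LinearMap.range (E' i)) ≤ L i)
    (heq : ∀ φ : Dual K V, ∑ i, φ (c i) • E i = ∑ i, φ (d i) • E' i) :
    ∃ σ : Equiv.Perm ι, ∀ i, L (σ i) = L i ∧ ∃ μ : K, μ ≠ 0 ∧ E' i = μ • E (σ i) := by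
  classical
  have hcard := hc.1
  obtain ⟨S, hScard, hS⟩ := exists_isHeaviest L (by lia : n - 2 ≤ Fintype.card ι)
  have hSn : S.card + 2 = n := by lia
  have hdom := h.dominatesFlats hnt hE' heq
  have hDcard := hdom.card_flat_span_eq hL hSn hS hc
  obtain ⟨f, hf⟩ := hdom.exists_equiv_compl hL hSn hS hc
  have hout := h.exists_smul_of_equiv_compl (by lia) hE hE' heq
    (fun i hi => subset_span (Set.mem_image_of_mem d hi)) f (fun i => (hf i).1) fun i p => by
      rw [← span_insert, (hf i).2]
  obtain ⟨j, -, hj⟩ := Finset.exists_mem_notMem_of_card_lt_card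
    (by rw [Finset.card_univ]; lia : S.card < (Finset.univ : Finset ι).card)
  have : FiniteDimensional K (span K (d '' S)) :=
    FiniteDimensional.span_of_finite K (S.finite_toSet.image d)
  obtain ⟨π, hπ⟩ := h.exists_equiv_smul (by lia) hL hE' heq
    ((hdom.linearIndepOn_insert hL hSn hS hc hj).mono (Set.subset_insert j _))
    (hc.linearIndepOn (by lia))
    (hc.span_flat_eq (by lia) ((finrank_span_image_le_card d S).trans_eq hDcard.symm)).symm
    (hdom.sum_flat_span_eq_and_subset_biUnion hL hSn hS hc).1
    fun j hj => ⟨f ⟨j, hj⟩, (f _).2, (hout ⟨j, hj⟩).imp fun _ => And.right⟩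
  refine ⟨π.subtypeCongr f, fun i => ?_⟩
  by_cases hi : i ∈ S
  · have hσ : π.subtypeCongr f i = π ⟨i, hi⟩ := by simp [Equiv.subtypeCongr, hi]
    rw [hσ]
    exact hπ ⟨i, hi⟩
  · have hσ : π.subtypeCongr f i = f ⟨i, hi⟩ := by simp [Equiv.subtypeCongr, hi]
    rw [hσ]
    exact ⟨(hf ⟨i, hi⟩).1, hout ⟨i, hi⟩⟩

theorem exists_perm_smul_inv_smul [Infinite K] [FiniteDimensional K W₂] (h : HasRankBound L E t)
    (hnt : Fintype.card ι + 2 ≤ n + t) (hn : 2 ≤ n) (hc : IsBlockIndep K id c n)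
    (hL : ∀ i, 1 ≤ L i) (hE : ∀ i, finrank K (LinearMap.range (E i)) ≤ L i)
    (hE' : ∀ i, finrank K (LinearMap.range (E' i)) ≤ L i)
    (heq : ∀ φ : Dual K V, ∑ i, φ (c i) • E i = ∑ i, φ (d i) • E' i) :
    ∃ (σ : Equiv.Perm ι) (μ : ι → K), ∀ i, L (σ i) = L i ∧ μ i ≠ 0 ∧ E' i = μ i • E (σ i) ∧
      d i = (μ i)⁻¹ • c (σ i) := by
  obtain ⟨σ, hσ⟩ := h.exists_perm_smul hnt hn hc hL hE hE' heq
  have ht : 1 ≤ t := by have := hc.1; lia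
  choose hLσ μ hμ hEσ using hσ
  exact ⟨σ, μ, fun i => ⟨hLσ i, hμ i, hEσ i,
    eq_inv_smul_of_eq_smul_perm (h.linearIndependent hL ht) hμ hEσ heq i⟩⟩

end HasRankBound

end Matching

section Matrix

open Module

variable {K m₁ m₂ κ : Type*} [Field K]

theorem exists_mul_eq_one_of_linearIndependent_col [Fintype m₁] [Finite κ] [DecidableEq κ]
    {A : Matrix m₁ κ K} (hA : LinearIndependent K A.col) : ∃ P : Matrix κ m₁ K, P * A = 1 := by
  classical
  have := Fintype.ofFinite κ
  obtain ⟨g, hg⟩ := A.toLin'.exists_leftInverse_of_injective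
    (LinearMap.ker_eq_bot.2 (Matrix.mulVec_injective_iff.2 hA))
  exact ⟨LinearMap.toMatrix' g, by
    rw [← LinearMap.toMatrix'_id, ← hg, LinearMap.toMatrix'_comp, LinearMap.toMatrix'_toLin']⟩

theorem exists_mul_apply_eq_one [Fintype m₁] [Finite κ] [DecidableEq κ] {A : Matrix m₁ κ K}
    {X : Set κ} (hA : LinearIndepOn K A.col X) :
    ∃ P : Matrix X m₁ K, ∀ (r : X), ∀ q ∈ X, (P * A) r q = (1 : Matrix κ κ K) r q := by
  have := Fintype.ofFinite X
  obtain ⟨P, hP⟩ := exists_mul_eq_one_of_linearIndependent_col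
    (A := A.submatrix id ((↑) : X → κ)) hA
  refine ⟨P, fun r q hq => ?_⟩
  have hrq : (P * A) r q = (1 : Matrix X X K) r ⟨q, hq⟩ := congrFun₂ hP r ⟨q, hq⟩
  simpa only [Matrix.one_apply, Subtype.ext_iff] using hrq

/-- Each term of the matrix product has one factor that agrees with the identity matrix and
vanishes off the diagonal. -/
theorem mul_diagonal_mul_transpose_eq_diagonal [Fintype κ] [DecidableEq κ] {X Y : Set κ}
    {T : Finset κ} {G H : Matrix T κ K} (hG : ∀ r, ∀ q ∈ X, G r q = (1 : Matrix κ κ K) r q)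
    (hH : ∀ r, ∀ q ∈ Y, H r q = (1 : Matrix κ κ K) r q) (hTX : ↑T ⊆ X) (hTY : ↑T ⊆ Y)
    (hXY : X ∪ Y = Set.univ) (d : κ → K) :
    G * Matrix.diagonal d * Hᵀ = Matrix.diagonal fun r : T => d r := by
  have hterm (r s : T) (q : κ) : G r q * d q * H s q =
      (1 : Matrix κ κ K) r q * d q * (1 : Matrix κ κ K) s q := by
    by_cases hqX : q ∈ X
    · rw [hG r q hqX]
      by_cases hrq : r = q
      · rw [hH s q (hTY (hrq ▸ r.2))]
      · rw [Matrix.one_apply_ne hrq, zero_mul, zero_mul, zero_mul]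
    · have hsq : (s : κ) ≠ q := fun hsq => hqX (hTX (hsq ▸ s.2))
      rw [hH s q ((hXY.ge (Set.mem_univ q)).resolve_left hqX), Matrix.one_apply_ne hsq, mul_zero,
        mul_zero]
  ext r s
  rw [Matrix.mul_apply]
  simp only [Matrix.mul_diagonal, Matrix.transpose_apply, hterm]
  rw [Fintype.sum_eq_single (r : κ)
      fun q hq => by rw [Matrix.one_apply_ne hq.symm, zero_mul, zero_mul],
    Matrix.one_apply_eq, one_mul]
  obtain rfl | hrs := eq_or_ne r s
  · rw [Matrix.one_apply_eq, mul_one, Matrix.diagonal_apply_eq]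
  · rw [Matrix.one_apply_ne (Subtype.coe_injective.ne hrs.symm), mul_zero,
      Matrix.diagonal_apply_ne _ hrs]

/-- Multiplying by vectors dual to the columns of `A` over `X` and of `B` over `Y` leaves the
diagonal matrix of the `d q` with `q ∈ T`. -/
theorem card_le_rank_mul_diagonal_mul_transpose [Finite m₁] [Fintype m₂] [Fintype κ]
    [DecidableEq κ] {A : Matrix m₁ κ K} {B : Matrix m₂ κ K} {X Y : Set κ} {T : Finset κ}
    (hA : LinearIndepOn K A.col X) (hB : LinearIndepOn K B.col Y) (hTX : ↑T ⊆ X) (hTY : ↑T ⊆ Y)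
    (hXY : X ∪ Y = Set.univ) {d : κ → K} (hd : ∀ q ∈ T, d q ≠ 0) :
    T.card ≤ (A * Matrix.diagonal d * Bᵀ).rank := by
  classical
  have := Fintype.ofFinite m₁
  obtain ⟨P, hP⟩ := exists_mul_apply_eq_one hA
  obtain ⟨R, hR⟩ := exists_mul_apply_eq_one hB
  let P' := P.submatrix (fun r : T => ⟨r, hTX r.2⟩) id
  let R' := R.submatrix (fun r : T => ⟨r, hTY r.2⟩) id
  have hdiag : P' * (A * Matrix.diagonal d * Bᵀ) * R'ᵀ = Matrix.diagonal fun r : T => d r :=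
    calc P' * (A * Matrix.diagonal d * Bᵀ) * R'ᵀ = P' * A * Matrix.diagonal d * (R' * B)ᵀ := by
          simp only [Matrix.transpose_mul, Matrix.mul_assoc]
      _ = Matrix.diagonal fun r : T => d r :=
        mul_diagonal_mul_transpose_eq_diagonal (fun r => hP ⟨r, hTX r.2⟩)
          (fun r => hR ⟨r, hTY r.2⟩) hTX hTY hXY d
  calc T.card = (Matrix.diagonal fun r : T => d r).rank := by
        rw [Matrix.rank_diagonal, Fintype.card_of_subtype Finset.univ (by simpa using hd),
          Finset.card_univ, Fintype.card_coe]
    _ ≤ (A * Matrix.diagonal d * Bᵀ).rank := by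
      rw [← hdiag]
      exact (Matrix.rank_mul_le_left _ _).trans (Matrix.rank_mul_le_right _ _)

theorem exists_eq_mul_of_mul_transpose_eq_smul [Finite m₁] [Finite m₂] [Fintype κ]
    [DecidableEq κ] {A A' : Matrix m₁ κ K} {B B' : Matrix m₂ κ K} (hA : LinearIndependent K A.col)
    (hB : LinearIndependent K B.col) {μ : K} (hμ : μ ≠ 0) (h : A' * B'ᵀ = μ • (A * Bᵀ)) :
    ∃ M N : Matrix κ κ K, IsUnit M ∧ IsUnit N ∧ μ⁻¹ • (M * Nᵀ) = 1 ∧ A' = A * M ∧ B' = B * N := by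
  have := Fintype.ofFinite m₁
  have := Fintype.ofFinite m₂
  obtain ⟨P, hP⟩ := exists_mul_eq_one_of_linearIndependent_col hA
  obtain ⟨R, hR⟩ := exists_mul_eq_one_of_linearIndependent_col hB
  have hBR : Bᵀ * Rᵀ = 1 := by rw [← Matrix.transpose_mul, hR, Matrix.transpose_one]
  have hMB : P * A' * B'ᵀ = μ • Bᵀ := by
    rw [Matrix.mul_assoc, h, Matrix.mul_smul, ← Matrix.mul_assoc, hP, Matrix.one_mul]
  have hAN : A' * (R * B')ᵀ = μ • A := by
    rw [Matrix.transpose_mul, ← Matrix.mul_assoc, h, Matrix.smul_mul, Matrix.mul_assoc, hBR,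
      Matrix.mul_one]
  have hMN : P * A' * (μ⁻¹ • (R * B')ᵀ) = 1 := by
    rw [Matrix.mul_smul, Matrix.mul_assoc, hAN, Matrix.mul_smul, hP, inv_smul_smul₀ hμ]
  have hNM : μ⁻¹ • (R * B')ᵀ * (P * A') = 1 := mul_eq_one_comm.1 hMN
  refine ⟨P * A', R * B', .of_mul_eq_one _ hMN, ?_, by rw [← Matrix.mul_smul, hMN], ?_, ?_⟩
  · rw [← Matrix.isUnit_transpose]
    exact .of_mul_eq_one (μ⁻¹ • (P * A')) (by rw [Matrix.mul_smul, ← Matrix.smul_mul, hNM])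
  · calc A' = A' * (μ⁻¹ • (R * B')ᵀ * (P * A')) := by rw [hNM, Matrix.mul_one]
      _ = A * (P * A') := by
        rw [← Matrix.mul_assoc, Matrix.mul_smul, hAN, inv_smul_smul₀ hμ]
  · apply Matrix.transpose_injective
    calc B'ᵀ = μ⁻¹ • (R * B')ᵀ * (P * A') * B'ᵀ := by rw [hNM, Matrix.one_mul]
      _ = (B * (R * B'))ᵀ := by
        rw [Matrix.mul_assoc, hMB, Matrix.mul_smul, Matrix.smul_mul, smul_inv_smul₀ hμ,
          ← Matrix.transpose_mul]

end Matrix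

section BlockTerm

open Module

variable {K ι m₁ m₂ W : Type*} [Field K] {L : ι → ℕ}

/-- The block matrix `[A_1 … A_Q]`; its column `⟨q, l⟩` is column `l` of the block `A q`. -/
def blockMatrix (A : ∀ q, Matrix m₁ (Fin (L q)) K) : Matrix m₁ (Σ q, Fin (L q)) K :=
  Matrix.of fun i p => A p.1 i p.2

theorem IsBlockIndep.linearIndependent_col [Fintype ι] {A : ∀ q, Matrix m₁ (Fin (L q)) K} {a : ℕ}
    (hA : IsBlockIndep K Sigma.fst (blockMatrix A).col a) (ha : 1 ≤ a) (q : ι) :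
    LinearIndependent K (A q).col :=
  (hA.linearIndepOn (s := {q}) (by simpa using ha)).comp
    (fun l => (⟨⟨q, l⟩, by simp⟩ : Sigma.fst ⁻¹' (({q} : Finset ι) : Set ι)))
    fun _ _ h => by simpa using h

theorem blockMatrix_mul_diagonal_mul_transpose [Fintype ι] [DecidableEq ι]
    (A : ∀ q, Matrix m₁ (Fin (L q)) K) (B : ∀ q, Matrix m₂ (Fin (L q)) K) (y : ι → K) :
    blockMatrix A * Matrix.diagonal (fun p : Σ q, Fin (L q) => y p.1) * (blockMatrix B)ᵀ =
      ∑ q, y q • (A q * (B q)ᵀ) := by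
  ext i j
  rw [Matrix.mul_apply]
  simp only [Matrix.mul_diagonal, Fintype.sum_sigma]
  simp only [Matrix.sum_apply, Matrix.smul_apply, Matrix.mul_apply, Matrix.transpose_apply,
    blockMatrix, Matrix.of_apply, smul_eq_mul, Finset.mul_sum]
  exact Finset.sum_congr rfl fun q _ => Finset.sum_congr rfl fun l _ => by ring

/-- Cover all blocks by sets `X` and `Y` containing `T` over which `A` and `B` are independent. -/
theorem hasRankBound_toLin'_mul_transpose [Fintype ι] [Finite m₁] [Fintype m₂] [DecidableEq m₂]
    {A : ∀ q, Matrix m₁ (Fin (L q)) K} {B : ∀ q, Matrix m₂ (Fin (L q)) K} {a b t : ℕ}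
    (hA : IsBlockIndep K Sigma.fst (blockMatrix A).col a)
    (hB : IsBlockIndep K Sigma.fst (blockMatrix B).col b) (hab : t + Fintype.card ι ≤ a + b) :
    HasRankBound L (fun q => (A q * (B q)ᵀ).toLin') t := by
  classical
  intro y T hy hT
  have hsum : (∑ q, y q • (A q * (B q)ᵀ)).toLin' = ∑ q, y q • (A q * (B q)ᵀ).toLin' := by
    simp only [map_sum, map_smul]
  have ha := hA.1
  have hb := hB.1
  obtain ⟨X, hTX, -, hX⟩ :=
    Finset.exists_subsuperset_card_eq T.subset_univ (by lia : T.card ≤ a) ha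
  have hY : (T ∪ Xᶜ).card ≤ b := by
    have := Finset.card_union_le T Xᶜ
    have := Finset.card_add_card_compl X
    lia
  have hXY : X ∪ (T ∪ Xᶜ) = Finset.univ := by
    rw [Finset.union_left_comm, Finset.union_compl, Finset.union_eq_right.2 T.subset_univ]
  have hrank := card_le_rank_mul_diagonal_mul_transpose (T := T.sigma fun _ => Finset.univ)
    (d := fun p => y p.1) (hA.linearIndepOn hX.le) (hB.linearIndepOn hY)
    (fun p hp => hTX (Finset.mem_sigma.1 hp).1)
    (fun p hp => Finset.mem_union_left _ (Finset.mem_sigma.1 hp).1)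
    (by rw [← Set.preimage_union, ← Finset.coe_union, hXY, Finset.coe_univ, Set.preimage_univ])
    fun p hp => hy p.1 (Finset.mem_sigma.1 hp).1
  rw [blockMatrix_mul_diagonal_mul_transpose] at hrank
  simp only [Finset.card_sigma, Finset.card_univ, Fintype.card_fin] at hrank
  rwa [Matrix.rank, ← Matrix.toLin'_apply', hsum] at hrank

theorem finrank_range_toLin'_mul_transpose_le {l : ℕ} [Fintype m₂] [DecidableEq m₂]
    (A : Matrix m₁ (Fin l) K) (B : Matrix m₂ (Fin l) K) :
    finrank K (LinearMap.range (A * Bᵀ).toLin') ≤ l :=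
  (Matrix.rank_mul_le_left A Bᵀ).trans (A.rank_le_card_width.trans_eq (Fintype.card_fin l))

theorem isBlockIndep_kRank {m Q : ℕ} (c : Fin Q → Fin m → ℂ) :
    IsBlockIndep ℂ id c (kRank (Matrix.of fun (i : Fin m) (q : Fin Q) => c q i)) := by
  have hmem : kRank (Matrix.of fun (i : Fin m) (q : Fin Q) => c q i) ∈ _ :=
    Nat.sSup_mem ⟨0, Nat.zero_le _, fun s hs => by
      have : IsEmpty s := by rw [Finset.card_eq_zero.1 hs]; infer_instance
      exact linearIndependent_empty_type⟩ ⟨Q, fun k hk => hk.1⟩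
  exact ⟨hmem.1.trans_eq (Fintype.card_fin Q).symm, hmem.2⟩

theorem isBlockIndep_gkRank {m Q : ℕ} (L : Fin Q → ℕ)
    (A : ∀ q : Fin Q, Matrix (Fin m) (Fin (L q)) ℂ) :
    IsBlockIndep ℂ Sigma.fst (blockMatrix A).col (gkRank L A) := by
  have hmem : gkRank L A ∈ _ :=
    Nat.sSup_mem ⟨0, Nat.zero_le _, fun s hs => by
      have : IsEmpty {q // q ∈ s} := by rw [Finset.card_eq_zero.1 hs]; infer_instance
      exact linearIndependent_empty_type⟩ ⟨Q, fun k hk => hk.1⟩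
  refine ⟨hmem.1.trans_eq (Fintype.card_fin Q).symm, fun s hs => ?_⟩
  refine (hmem.2 s hs).comp
    (fun p : {p : (Σ q, Fin (L q)) | p.1 ∈ s} => ⟨⟨p.1.1, p.2⟩, p.1.2⟩) ?_
  rintro ⟨⟨q, l⟩, h⟩ ⟨⟨q', l'⟩, h'⟩ e
  simp only [Sigma.mk.injEq, Subtype.mk.injEq] at e
  obtain ⟨rfl, e⟩ := e
  obtain rfl := eq_of_heq e
  rfl

theorem btd_uniqueness_general [Infinite K] [Fintype ι] [Finite m₁] [Finite m₂]
    [AddCommGroup W] [Module K W] (hL : ∀ q, 1 ≤ L q)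
    {A A' : ∀ q, Matrix m₁ (Fin (L q)) K} {B B' : ∀ q, Matrix m₂ (Fin (L q)) K} {c c' : ι → W}
    {a b k : ℕ} (hA : IsBlockIndep K Sigma.fst (blockMatrix A).col a)
    (hB : IsBlockIndep K Sigma.fst (blockMatrix B).col b) (hc : IsBlockIndep K id c k)
    (hKruskal : 2 * Fintype.card ι + 2 ≤ a + b + k)
    (heq : ∀ i j, ∑ q, (A' q * (B' q)ᵀ) i j • c' q = ∑ q, (A q * (B q)ᵀ) i j • c q) :
    ∃ (σ : Equiv.Perm ι) (hσ : ∀ q, L (σ q) = L q) (M N : ∀ q, Matrix (Fin (L q)) (Fin (L q)) K)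
      (lam : ι → K), (∀ q, IsUnit (M q)) ∧ (∀ q, IsUnit (N q)) ∧ (∀ q, lam q ≠ 0) ∧
      (∀ q, lam q • (M q * (N q)ᵀ) = 1) ∧
      (∀ q, A' q = (A (σ q)).submatrix id (Fin.cast (hσ q).symm) * M q) ∧
      (∀ q, B' q = (B (σ q)).submatrix id (Fin.cast (hσ q).symm) * N q) ∧
      ∀ q, c' q = lam q • c (σ q) := by
  classical
  have := Fintype.ofFinite m₂
  have ha := hA.1
  have hb := hB.1
  have hk := hc.1
  have hslice (φ : Dual K W) : ∑ q, φ (c q) • (A q * (B q)ᵀ).toLin' =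
      ∑ q, φ (c' q) • (A' q * (B' q)ᵀ).toLin' := by
    simp only [← map_smul, ← map_sum]
    congr 1
    ext i j
    have hφ := congrArg φ (heq i j)
    simp only [map_sum, map_smul, smul_eq_mul, mul_comm _ (φ _)] at hφ
    simpa only [Matrix.sum_apply, Matrix.smul_apply, smul_eq_mul] using hφ.symm
  obtain ⟨σ, μ, h⟩ := (hasRankBound_toLin'_mul_transpose (t := Fintype.card ι + 2 - k) hA hB
    (by lia)).exists_perm_smul_inv_smul (by lia) (by lia) hc hL
    (fun q => finrank_range_toLin'_mul_transpose_le (A q) (B q))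
    (fun q => finrank_range_toLin'_mul_transpose_le (A' q) (B' q)) hslice
  choose hσ hμ hAB hcσ using h
  have hmat (q : ι) : A' q * (B' q)ᵀ = μ q • ((A (σ q)).submatrix id (Fin.cast (hσ q).symm) *
      ((B (σ q)).submatrix id (Fin.cast (hσ q).symm))ᵀ) := by
    apply Matrix.toLin'.injective
    rw [hAB, map_smul, Matrix.transpose_submatrix]
    congr 2
    exact (Matrix.submatrix_mul_equiv _ _ id (finCongr (hσ q).symm) id).symm
  choose M N hM hN hMN hAM hBN using fun q => exists_eq_mul_of_mul_transpose_eq_smul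
    ((hA.linearIndependent_col (by lia) (σ q)).comp (Fin.cast (hσ q).symm) (Fin.cast_injective _))
    ((hB.linearIndependent_col (by lia) (σ q)).comp (Fin.cast (hσ q).symm) (Fin.cast_injective _))
    (hμ q) (hmat q)
  exact ⟨σ, hσ, M, N, fun q => (μ q)⁻¹, hM, hN, fun q => inv_ne_zero (hμ q), hMN, hAM, hBN, hcσ⟩

end BlockTerm

/-- Generalized Kruskal uniqueness theorem for the block term decomposition of a
third-order tensor into rank-`(L q, L q, 1)` terms. -/
theorem btd_uniqueness {I₁ I₂ I₃ Q : ℕ} (hQ : 1 ≤ Q)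
    (L : Fin Q → ℕ) (hL : ∀ q, 1 ≤ L q)
    (A : ∀ q : Fin Q, Matrix (Fin I₁) (Fin (L q)) ℂ)
    (B : ∀ q : Fin Q, Matrix (Fin I₂) (Fin (L q)) ℂ)
    (c : Fin Q → Fin I₃ → ℂ)
    (hA : ∀ q, LinearIndependent ℂ (fun j : Fin (L q) => fun i : Fin I₁ => A q i j))
    (hB : ∀ q, LinearIndependent ℂ (fun j : Fin (L q) => fun i : Fin I₂ => B q i j))
    (hI₁ : ∀ q, L q ≤ I₁) (hI₂ : ∀ q, L q ≤ I₂)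
    (hdim : ∑ q : Fin Q, (L q) ^ 2 ≤ I₁ * I₂)
    (hKruskal : 2 * Q + 2 ≤
      gkRank L A + gkRank L B + kRank (Matrix.of fun (i : Fin I₃) (q : Fin Q) => c q i))
    (A' : ∀ q : Fin Q, Matrix (Fin I₁) (Fin (L q)) ℂ)
    (B' : ∀ q : Fin Q, Matrix (Fin I₂) (Fin (L q)) ℂ)
    (c' : Fin Q → Fin I₃ → ℂ)
    (heq : ∀ (i : Fin I₁) (j : Fin I₂) (k : Fin I₃),
      ∑ q : Fin Q, (∑ l : Fin (L q), A' q i l * B' q j l) * c' q k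
        = ∑ q : Fin Q, (∑ l : Fin (L q), A q i l * B q j l) * c q k) :
    ∃ (σ : Equiv.Perm (Fin Q)) (hσ : ∀ q, L (σ q) = L q)
      (M : ∀ q : Fin Q, Matrix (Fin (L q)) (Fin (L q)) ℂ)
      (N : ∀ q : Fin Q, Matrix (Fin (L q)) (Fin (L q)) ℂ)
      (lam : Fin Q → ℂ),
      (∀ q, IsUnit (M q)) ∧ (∀ q, IsUnit (N q)) ∧ (∀ q, lam q ≠ 0) ∧
      (∀ q, lam q • (M q * (N q)ᵀ) = 1) ∧
      (∀ (q : Fin Q) (i : Fin I₁) (j : Fin (L q)),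
        A' q i j = ∑ l : Fin (L q), A (σ q) i (Fin.cast (hσ q).symm l) * M q l j) ∧
      (∀ (q : Fin Q) (i : Fin I₂) (j : Fin (L q)),
        B' q i j = ∑ l : Fin (L q), B (σ q) i (Fin.cast (hσ q).symm l) * N q l j) ∧
      (∀ (q : Fin Q) (k : Fin I₃), c' q k = lam q * c (σ q) k) := by
  obtain ⟨σ, hσ, M, N, lam, hM, hN, hlam, hMN, hA', hB', hc'⟩ :=
    btd_uniqueness_general (A := A) (A' := A') (B := B) (B' := B') (c := c) (c' := c') hL
      (isBlockIndep_gkRank L A) (isBlockIndep_gkRank L B) (isBlockIndep_kRank c)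
      (by rwa [Fintype.card_fin]) fun i j => funext fun k => by
        simpa [Finset.sum_apply, Matrix.mul_apply] using heq i j k
  exact ⟨σ, hσ, M, N, lam, hM, hN, hlam, hMN, fun q => congrFun₂ (hA' q),
    fun q => congrFun₂ (hB' q), fun q => congrFun (hc' q)⟩
end

section
/- A random phase-only combining matrix is full column rank with probability one: Let N ≥ M ≥ 1. For a real phase matrix Φ ∈ ℝ^{N×M}, define W(Φ) ∈ ℂ^{N×M} entrywise by W(Φ)(n,m) = exp(i·Φ(n,m)). Then the set of Φ ∈ ℝ^{N×M} for which W(Φ) does not have full column rank M (i.e., the columns of W(Φ) are linearly dependent over ℂ) has Lebesgue measure zero in ℝ^{N·M}. -/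
open MeasureTheory

/-!
Almost sure linear independence of the columns follows once a single maximal minor is almost surely
nonzero. Such a minor is a nonzero polynomial in the entries of the matrix, and the entries are
functions of independent parameters, each taking any prescribed value with measure zero. A nonzero
polynomial almost never vanishes under such a substitution: view it as a univariate polynomial in
one of the variables. By induction its coefficients, which are polynomials in the other variables,
almost never vanish simultaneously; where they do not, only the finitely many roots have to be
avoided, and Fubini concludes.
-/

section PolynomialNonvanishing

theorem measurable_mvPolynomial_eval {σ K : Type*} [CommSemiring K] [MeasurableSpace K]
    [MeasurableAdd₂ K] [MeasurableMul₂ K] (P : MvPolynomial σ K) :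
    Measurable fun x : σ → K => MvPolynomial.eval x P := by
  simp only [MvPolynomial.eval_eq]
  fun_prop

theorem ae_pi_fin_succ_iff {n : ℕ} {Ω : Fin (n + 1) → Type*} [∀ i, MeasurableSpace (Ω i)]
    (μ : ∀ i, Measure (Ω i)) [∀ i, SigmaFinite (μ i)] {p : (∀ i, Ω i) → Prop}
    (hp : MeasurableSet {x | p x}) :
    (∀ᵐ x ∂Measure.pi μ, p x) ↔
      ∀ᵐ y ∂Measure.pi fun i : Fin n => μ i.succ, ∀ᵐ t ∂μ 0, p (Fin.cons t y) := by
  have split := (measurePreserving_piFinSuccAbove μ 0).symm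
  have split_apply (t : Ω 0) (y : ∀ i : Fin n, Ω i.succ) :
      (MeasurableEquiv.piFinSuccAbove Ω 0).symm (t, y) = Fin.cons t y :=
    congrArg (· (t, y)) (Fin.insertNthEquiv_zero Ω)
  have hp_split : MeasurableSet {z | p ((MeasurableEquiv.piFinSuccAbove Ω 0).symm z)} :=
    split.measurable hp
  rw [← split.map_eq, ae_map_iff split.aemeasurable hp, Measure.ae_prod_iff_ae_ae hp_split,
    Measure.ae_ae_comm hp_split]
  simp only [← split_apply]
  -- `Fin.succAbove 0 j` unfolds to `j.succ`
  rfl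

variable {K : Type*} [CommRing K] [IsDomain K]

theorem ae_polynomial_eval_ne_zero {Ω : Type*} [MeasurableSpace Ω] {μ : Measure Ω}
    {f : Ω → K} (hf : ∀ c, ∀ᵐ t ∂μ, f t ≠ c) {p : Polynomial K} (hp : p ≠ 0) :
    ∀ᵐ t ∂μ, p.eval (f t) ≠ 0 := by
  have avoids_roots : ∀ᵐ t ∂μ, ∀ c ∈ {c | p.IsRoot c}, f t ≠ c :=
    (ae_ball_iff (Polynomial.finite_setOfPred_isRoot hp).countable).2 fun c _ => hf c
  filter_upwards [avoids_roots] with t ht hroot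
  exact ht _ hroot rfl

variable [MeasurableSpace K] [MeasurableSingletonClass K] [MeasurableAdd₂ K] [MeasurableMul₂ K]

theorem ae_mvPolynomial_fin_eval_ne_zero {n : ℕ} {Ω : Fin n → Type*}
    [∀ i, MeasurableSpace (Ω i)] (μ : ∀ i, Measure (Ω i)) [∀ i, SigmaFinite (μ i)]
    {f : ∀ i, Ω i → K} (hfm : ∀ i, Measurable (f i)) (hf : ∀ i c, ∀ᵐ t ∂μ i, f i t ≠ c)
    {P : MvPolynomial (Fin n) K} (hP : P ≠ 0) :
    ∀ᵐ x ∂Measure.pi μ, MvPolynomial.eval (fun i => f i (x i)) P ≠ 0 := by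
  induction n with
  | zero =>
    rw [P.eq_C_of_isEmpty] at hP ⊢
    exact .of_forall fun x => by simpa using hP
  | succ n ih =>
    set q := MvPolynomial.finSuccEquiv K n P
    have hq : q ≠ 0 := by simpa [q] using hP
    obtain ⟨k, hk⟩ : ∃ k, q.coeff k ≠ 0 := by simpa [Polynomial.ext_iff] using hq
    have coeff_ne_zero := ih (fun i => μ i.succ) (fun i => hfm i.succ) (fun i => hf i.succ) hk
    have hmeas : MeasurableSet {x : ∀ i, Ω i | MvPolynomial.eval (fun i => f i (x i)) P ≠ 0} :=
      ((measurable_mvPolynomial_eval P).comp (by fun_prop)) (measurableSet_singleton 0).compl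
    rw [ae_pi_fin_succ_iff μ hmeas]
    filter_upwards [coeff_ne_zero] with y hy
    have hqy : q.map (MvPolynomial.eval fun i => f i.succ (y i)) ≠ 0 := fun h =>
      hy (by rw [← Polynomial.coeff_map, h, Polynomial.coeff_zero])
    filter_upwards [ae_polynomial_eval_ne_zero (hf 0) hqy] with t ht
    rw [← MvPolynomial.eval_eq_eval_mv_eval'] at ht
    convert ht using 3
    ext i
    cases i using Fin.cases <;> rfl

theorem ae_mvPolynomial_eval_ne_zero {ι : Type*} [Fintype ι] {Ω : ι → Type*}
    [∀ i, MeasurableSpace (Ω i)] (μ : ∀ i, Measure (Ω i)) [∀ i, SigmaFinite (μ i)]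
    {f : ∀ i, Ω i → K} (hfm : ∀ i, Measurable (f i)) (hf : ∀ i c, ∀ᵐ t ∂μ i, f i t ≠ c)
    {P : MvPolynomial ι K} (hP : P ≠ 0) :
    ∀ᵐ x ∂Measure.pi μ, MvPolynomial.eval (fun i => f i (x i)) P ≠ 0 := by
  let e := (Fintype.equivFin ι).symm
  have hQ : MvPolynomial.rename e.symm P ≠ 0 :=
    (map_ne_zero_iff _ (MvPolynomial.rename_injective _ e.symm.injective)).2 hP
  have reindex := (measurePreserving_piCongrLeft μ e).symm.quasiMeasurePreserving
  filter_upwards [reindex.ae <| ae_mvPolynomial_fin_eval_ne_zero (fun j => μ (e j))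
    (fun j => hfm (e j)) (fun j => hf (e j)) hQ] with x hx
  rw [MvPolynomial.eval_rename] at hx
  convert hx using 3
  ext i
  exact (congrArg (fun j => f j (x j)) (e.apply_symm_apply i)).symm

end PolynomialNonvanishing

section RandomMatrix

variable {K : Type*} [CommRing K] [IsDomain K]

theorem linearIndependent_col_of_det_submatrix_ne_zero {m n : Type*} [Fintype n] [DecidableEq n]
    (e : n → m) {A : Matrix m n K} (h : (A.submatrix e id).det ≠ 0) :
    LinearIndependent K A.col :=
  LinearIndependent.of_comp (LinearMap.funLeft K K e)
    (Matrix.linearIndependent_cols_of_det_ne_zero h)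

variable [MeasurableSpace K] [MeasurableSingletonClass K] [MeasurableAdd₂ K] [MeasurableMul₂ K]

theorem ae_det_ne_zero {ι n : Type*} [Fintype ι] [Fintype n] [DecidableEq n] {Ω : ι → Type*}
    [∀ i, MeasurableSpace (Ω i)] (μ : ∀ i, Measure (Ω i)) [∀ i, SigmaFinite (μ i)]
    {f : ∀ i, Ω i → K} (hfm : ∀ i, Measurable (f i)) (hf : ∀ i c, ∀ᵐ t ∂μ i, f i t ≠ c)
    {k : n × n → ι} (hk : k.Injective) :
    ∀ᵐ x ∂Measure.pi μ, (Matrix.of fun i j => f (k (i, j)) (x (k (i, j)))).det ≠ 0 := by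
  have hdet : MvPolynomial.rename k (Matrix.mvPolynomialX n n K).det ≠ 0 :=
    (map_ne_zero_iff _ (MvPolynomial.rename_injective k hk)).2
      (Matrix.det_mvPolynomialX_ne_zero n K)
  filter_upwards [ae_mvPolynomial_eval_ne_zero μ hfm hf hdet] with x hx
  rwa [MvPolynomial.eval_rename, Matrix.eval_det_mvPolynomialX] at hx

theorem random_phase_matrix_full_column_rank_ae_general {m n : Type*} [Fintype m] [Fintype n]
    (hcard : Fintype.card n ≤ Fintype.card m) {Ω : m × n → Type*} [∀ p, MeasurableSpace (Ω p)]
    (μ : ∀ p, Measure (Ω p)) [∀ p, SigmaFinite (μ p)] {f : ∀ p, Ω p → K}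
    (hfm : ∀ p, Measurable (f p)) (hf : ∀ p c, ∀ᵐ t ∂μ p, f p t ≠ c) :
    ∀ᵐ x ∂Measure.pi μ, LinearIndependent K fun j i => f (i, j) (x (i, j)) := by
  classical
  obtain ⟨e⟩ := Function.Embedding.nonempty_of_card_le hcard
  have minor_ne_zero := ae_det_ne_zero μ hfm hf (e.injective.prodMap Function.injective_id)
  filter_upwards [minor_ne_zero] with x hx
  exact linearIndependent_col_of_det_submatrix_ne_zero
    (A := Matrix.of fun i j => f (i, j) (x (i, j))) e hx

end RandomMatrix

theorem ae_cexp_I_mul_ne {μ : Measure ℝ} [NullSingletonClass μ] (c : ℂ) :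
    ∀ᵐ t : ℝ ∂μ, Complex.exp (Complex.I * t) ≠ c := by
  filter_upwards [((Set.countable_singleton c).preimage_circleMap 0 one_ne_zero).ae_notMem μ]
    with t ht
  simpa [circleMap, mul_comm] using ht

/-- A random phase-only combining matrix is full column rank with probability one:
the set of real phase matrices `Φ` for which the columns of
`W(Φ) (n, m) = exp(i Φ(n, m))` are linearly dependent over `ℂ` has Lebesgue
measure zero. -/
theorem random_phase_matrix_full_column_rank_ae {N M : ℕ} (hM : 1 ≤ M) (hNM : M ≤ N) :
    volume {Φ : Fin N × Fin M → ℝ |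
      ¬ LinearIndependent ℂ
        (fun m : Fin M => fun n : Fin N => Complex.exp (Complex.I * (Φ (n, m) : ℂ)))} = 0 := by
  exact ae_iff.1 <| random_phase_matrix_full_column_rank_ae_general (by simpa using hNM)
    (fun _ => volume) (f := fun _ (t : ℝ) => Complex.exp (Complex.I * t)) (fun _ => by fun_prop)
    (fun _ => ae_cexp_I_mul_ne)
end
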